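/- Let (η, α, U, A, φ, σ) be a solution of the Gowdy symmetric IIA system on (T₋,T₊) with 0 < T₋ < t_i < T₊ < ∞. Assume there is a constant λ̄ with |λ| ≤ λ̄ < 1/2 and that the timelike convergence condition φ̇² + e^{2λφ}σ̇² ≥ (1/2)αQ²e^{2(η+λφ−U)} holds at every point. Then α'', η̈, η̇' and η'' are bounded on (T₋,t_i] × S¹. -/

import Mathlib

/-!
Write `N = α Q² exp(2λφ + 2(η - U))`, so that `∂_t log α = - t N`, and let `dens e` be the energy
density of the null derivatives `∂_t + e √α ∂_θ` of `U, A, φ, σ`, for `e = ±1`. Towards the past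
`α` increases, so `1/√α` is bounded; what has to be excluded is that `α` blows up.

*Bound for `α`.* The energy `∫ en / √α`, where `en` is the mean of the two null densities, is
bounded towards the past (`energy_bound`). The constraints express `∂_θ log N` by first derivatives
of the fields divided by `√α` and by the energy density, so the values of `N` at equal times are
comparable (`harnack`). By the timelike convergence condition and `|λ| < 1/2` the energy decays in
time at a rate at least a positive multiple of `t N` (`dissipation`); by the Harnack inequality it
therefore dominates a positive power of `α(t, 0)`. Since it is bounded, so is `log α`
(`logα_zero_bound`).

*First derivatives.* The densities satisfy transport equations along the null directions in which
the wave-map nonlinearities cancel. Their growth towards the past is at most of rate `C (1 + t N)`,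
and `∫ t N dt` is the variation of `log α`. A maximum principle for the pair of transport equations
(`light_cone_bound`) bounds the densities (`dens_bound`), and hence all quantities of first order.

*Second derivatives.* Applying `∂_θ` to the null form of the wave equations gives transport
equations for the angular derivatives of the null derivatives which are linear in them up to
bounded factors; the light-cone estimate applies once more (`wt_bound`, `secondCtl_one`). Then
`∂_t ∂_θ² log α` is bounded, and integration over the finite time interval bounds `∂_θ² log α`. The
bounds for the angular derivatives of `∂_t η` and `∂_θ η` follow from the constraints, and that for
`∂_t² η` from differentiating the constraint for `∂_t η` in time, by means of the transport equation
for the densities.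
-/

noncomputable section

open Real Set MeasureTheory Filter

/-- Partial derivative in the first (time) variable. -/
def pt (f : ℝ → ℝ → ℝ) : ℝ → ℝ → ℝ := fun t θ => deriv (fun s => f s θ) t

/-- Partial derivative in the second (angle) variable. -/
def pth (f : ℝ → ℝ → ℝ) : ℝ → ℝ → ℝ := fun t θ => deriv (fun x => f t x) θ

/-- The full Gowdy symmetric IIA system (both constraints, the equation for `α`,
and the four evolution equations) holding at all times in `S` (dot = `pt`,
prime = `pth`). -/
structure IsGowdyIIA (Q lam : ℝ) (S : Set ℝ) (η α U A φ σ : ℝ → ℝ → ℝ) : Prop where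
  alpha_pos : ∀ t ∈ S, ∀ θ : ℝ, 0 < α t θ
  constraint_t : ∀ t ∈ S, ∀ θ : ℝ,
    pt η t θ / t =
      (pt U t θ) ^ 2 + α t θ * (pth U t θ) ^ 2
      + exp (4 * U t θ) / (4 * t ^ 2) * ((pt A t θ) ^ 2 + α t θ * (pth A t θ) ^ 2)
      + (1 / 4) * ((pt φ t θ) ^ 2 + α t θ * (pth φ t θ) ^ 2
          + exp (2 * lam * φ t θ) * ((pt σ t θ) ^ 2 + α t θ * (pth σ t θ) ^ 2)
          + α t θ * Q ^ 2 * exp (2 * lam * φ t θ + 2 * (η t θ - U t θ)))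
  constraint_θ : ∀ t ∈ S, ∀ θ : ℝ,
    pth η t θ / t =
      2 * pt U t θ * pth U t θ
      + exp (4 * U t θ) / (2 * t ^ 2) * (pt A t θ * pth A t θ)
      - pth α t θ / (2 * t * α t θ)
      + (1 / 2) * (pt φ t θ * pth φ t θ
          + exp (2 * lam * φ t θ) * (pt σ t θ * pth σ t θ))
  constraint_α : ∀ t ∈ S, ∀ θ : ℝ,
    pt α t θ = - t * (α t θ) ^ 2 * Q ^ 2 * exp (2 * lam * φ t θ + 2 * (η t θ - U t θ))
  evol_U : ∀ t ∈ S, ∀ θ : ℝ,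
    pt (pt U) t θ - α t θ * pth (pth U) t θ =
      - pt U t θ / t + pt α t θ * pt U t θ / (2 * α t θ) + pth α t θ * pth U t θ / 2
      + exp (4 * U t θ) / (2 * t ^ 2) * ((pt A t θ) ^ 2 - α t θ * (pth A t θ) ^ 2)
      + (1 / 4) * α t θ * Q ^ 2 * exp (2 * lam * φ t θ + 2 * (η t θ - U t θ))
  evol_A : ∀ t ∈ S, ∀ θ : ℝ,
    pt (pt A) t θ - α t θ * pth (pth A) t θ =
      pt A t θ / t + pt α t θ * pt A t θ / (2 * α t θ) + pth α t θ * pth A t θ / 2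
      - 4 * (pt A t θ * pt U t θ - α t θ * pth A t θ * pth U t θ)
  evol_φ : ∀ t ∈ S, ∀ θ : ℝ,
    pt (pt φ) t θ - α t θ * pth (pth φ) t θ =
      - pt φ t θ / t + pt α t θ * pt φ t θ / (2 * α t θ) + pth α t θ * pth φ t θ / 2
      + lam * exp (2 * lam * φ t θ) * ((pt σ t θ) ^ 2 - α t θ * (pth σ t θ) ^ 2)
      - lam * α t θ * Q ^ 2 * exp (2 * lam * φ t θ + 2 * (η t θ - U t θ))
  evol_σ : ∀ t ∈ S, ∀ θ : ℝ,
    pt (pt σ) t θ - α t θ * pth (pth σ) t θ =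
      - pt σ t θ / t + pt α t θ * pt σ t θ / (2 * α t θ) + pth α t θ * pth σ t θ / 2
      - 2 * lam * (pt φ t θ * pt σ t θ - α t θ * pth φ t θ * pth σ t θ)

/-- A smooth, spatially `2π`-periodic solution of the Gowdy symmetric IIA system
on the areal time interval `(Tm, Tp)`. -/
structure GowdySolution (Q lam Tm Tp : ℝ) where
  η : ℝ → ℝ → ℝ
  α : ℝ → ℝ → ℝ
  U : ℝ → ℝ → ℝ
  A : ℝ → ℝ → ℝ
  φ : ℝ → ℝ → ℝ
  σ : ℝ → ℝ → ℝ
  smooth : ∀ f ∈ ([η, α, U, A, φ, σ] : List (ℝ → ℝ → ℝ)),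
    ContDiffOn ℝ (⊤ : ℕ∞) (fun p : ℝ × ℝ => f p.1 p.2) (Ioo Tm Tp ×ˢ (univ : Set ℝ))
  periodic : ∀ f ∈ ([η, α, U, A, φ, σ] : List (ℝ → ℝ → ℝ)), ∀ t θ : ℝ,
    f t (θ + 2 * π) = f t θ
  sys : IsGowdyIIA Q lam (Ioo Tm Tp) η α U A φ σ

/-- The energy density `𝓔`. -/
def calE (lam : ℝ) (α U A φ σ : ℝ → ℝ → ℝ) (t θ : ℝ) : ℝ :=
  (pt U t θ) ^ 2 + α t θ * (pth U t θ) ^ 2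
  + exp (4 * U t θ) / (4 * t ^ 2) * ((pt A t θ) ^ 2 + α t θ * (pth A t θ) ^ 2)
  + (1 / 4) * ((pt φ t θ) ^ 2 + α t θ * (pth φ t θ) ^ 2
      + exp (2 * lam * φ t θ) * ((pt σ t θ) ^ 2 + α t θ * (pth σ t θ) ^ 2))

/-- The energy `E(t)` (integral over the circle `S¹ = [0, 2π]`). -/
def energyE (Q lam : ℝ) (η α U A φ σ : ℝ → ℝ → ℝ) (t : ℝ) : ℝ :=
  ∫ θ in Ioc (0 : ℝ) (2 * π),
    (1 / Real.sqrt (α t θ)) *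
      (calE lam α U A φ σ t θ
        + (1 / 4) * α t θ * Q ^ 2 * exp (2 * (η t θ + lam * φ t θ - U t θ)))

/-- The energy `Ẽ(t)`. -/
def energyEt (lam : ℝ) (α U A φ σ : ℝ → ℝ → ℝ) (t : ℝ) : ℝ :=
  ∫ θ in Ioc (0 : ℝ) (2 * π), calE lam α U A φ σ t θ / Real.sqrt (α t θ)

/-- The timelike convergence condition (TCC) for the Gowdy symmetric IIA system. -/
def TCC (Q lam Tm Tp : ℝ) (η α U φ σ : ℝ → ℝ → ℝ) : Prop :=
  ∀ t ∈ Ioo Tm Tp, ∀ θ : ℝ,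
    (pt φ t θ) ^ 2 + exp (2 * lam * φ t θ) * (pt σ t θ) ^ 2
      ≥ (1 / 2) * α t θ * Q ^ 2 * exp (2 * (η t θ + lam * φ t θ - U t θ))

/-! ### Calculus on the strip -/

/-- `f` is smooth on the strip `(Tm, Tp) × ℝ` and `2π`-periodic in the angle. -/
structure Sm (Tm Tp : ℝ) (f : ℝ → ℝ → ℝ) : Prop where
  cd : ContDiffOn ℝ (⊤ : ℕ∞) (fun p : ℝ × ℝ => f p.1 p.2) (Ioo Tm Tp ×ˢ (univ : Set ℝ))
  per : ∀ t θ : ℝ, f t (θ + 2 * π) = f t θ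

namespace Sm
variable {Tm Tp : ℝ} {f g : ℝ → ℝ → ℝ}

theorem isOpen_strip (Tm Tp : ℝ) : IsOpen (Ioo Tm Tp ×ˢ (univ : Set ℝ)) :=
  isOpen_Ioo.prod isOpen_univ

theorem cdAt (hf : Sm Tm Tp f) {t θ : ℝ} (ht : t ∈ Ioo Tm Tp) :
    ContDiffAt ℝ (⊤ : ℕ∞) (fun p : ℝ × ℝ => f p.1 p.2) (t, θ) :=
  hf.cd.contDiffAt ((isOpen_strip Tm Tp).mem_nhds ⟨ht, mem_univ _⟩)

theorem fd (hf : Sm Tm Tp f) {t θ : ℝ} (ht : t ∈ Ioo Tm Tp) :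
    HasFDerivAt (fun p : ℝ × ℝ => f p.1 p.2)
      (fderiv ℝ (fun p : ℝ × ℝ => f p.1 p.2) (t, θ)) (t, θ) :=
  ((hf.cdAt ht).differentiableAt (by simp)).hasFDerivAt

theorem pt_eq (hf : Sm Tm Tp f) {t θ : ℝ} (ht : t ∈ Ioo Tm Tp) :
    pt f t θ = fderiv ℝ (fun p : ℝ × ℝ => f p.1 p.2) (t, θ) (1, 0) := by
  have h1 : HasDerivAt (fun s : ℝ => (s, θ)) ((1 : ℝ), (0 : ℝ)) t :=
    (hasDerivAt_id t).prodMk (hasDerivAt_const t θ)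
  exact ((hf.fd ht).comp_hasDerivAt_of_eq t h1 rfl).deriv

theorem pth_eq (hf : Sm Tm Tp f) {t θ : ℝ} (ht : t ∈ Ioo Tm Tp) :
    pth f t θ = fderiv ℝ (fun p : ℝ × ℝ => f p.1 p.2) (t, θ) (0, 1) := by
  have h1 : HasDerivAt (fun s : ℝ => (t, s)) ((0 : ℝ), (1 : ℝ)) θ :=
    (hasDerivAt_const θ t).prodMk (hasDerivAt_id θ)
  exact ((hf.fd ht).comp_hasDerivAt θ h1).deriv

theorem hasT (hf : Sm Tm Tp f) {t : ℝ} (ht : t ∈ Ioo Tm Tp) (θ : ℝ) :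
    HasDerivAt (fun s => f s θ) (pt f t θ) t := by
  have h1 : HasDerivAt (fun s : ℝ => (s, θ)) ((1 : ℝ), (0 : ℝ)) t :=
    (hasDerivAt_id t).prodMk (hasDerivAt_const t θ)
  rw [hf.pt_eq ht]
  exact (hf.fd ht).comp_hasDerivAt_of_eq t h1 rfl

theorem hasTh (hf : Sm Tm Tp f) {t : ℝ} (ht : t ∈ Ioo Tm Tp) (θ : ℝ) :
    HasDerivAt (fun x => f t x) (pth f t θ) θ := by
  have h1 : HasDerivAt (fun s : ℝ => (t, s)) ((0 : ℝ), (1 : ℝ)) θ :=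
    (hasDerivAt_const θ t).prodMk (hasDerivAt_id θ)
  rw [hf.pth_eq ht]
  exact (hf.fd ht).comp_hasDerivAt θ h1

theorem cd_fderiv (hf : Sm Tm Tp f) :
    ContDiffOn ℝ (⊤ : ℕ∞) (fderiv ℝ (fun p : ℝ × ℝ => f p.1 p.2))
      (Ioo Tm Tp ×ˢ (univ : Set ℝ)) :=
  hf.cd.fderiv_of_isOpen (isOpen_strip Tm Tp) (by simp)

theorem pt (hf : Sm Tm Tp f) : Sm Tm Tp (pt f) where
  cd := by
    refine (hf.cd_fderiv.clm_apply (contDiffOn_const (c := ((1 : ℝ), (0 : ℝ))))).congr ?_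
    rintro ⟨t, θ⟩ ⟨ht, -⟩
    exact hf.pt_eq ht
  per t θ := by
    have : (fun s => f s (θ + 2 * π)) = fun s => f s θ := funext fun s => hf.per s θ
    simp only [_root_.pt, this]

theorem pth (hf : Sm Tm Tp f) : Sm Tm Tp (pth f) where
  cd := by
    refine (hf.cd_fderiv.clm_apply (contDiffOn_const (c := ((0 : ℝ), (1 : ℝ))))).congr ?_
    rintro ⟨t, θ⟩ ⟨ht, -⟩
    exact hf.pth_eq ht
  per t θ := by
    have h : (fun x => f t (x + 2 * π)) = fun x => f t x := funext fun x => hf.per t x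
    simp only [_root_.pth]
    rw [← deriv_comp_add_const, h]

theorem comm (hf : Sm Tm Tp f) {t : ℝ} (ht : t ∈ Ioo Tm Tp) (θ : ℝ) :
    _root_.pt (_root_.pth f) t θ = _root_.pth (_root_.pt f) t θ := by
  set F : ℝ × ℝ → ℝ := fun p => f p.1 p.2 with hF
  have hsym : IsSymmSndFDerivAt ℝ F (t, θ) :=
    (hf.cdAt ht).isSymmSndFDerivAt (by
      rw [minSmoothness_of_isRCLikeNormedField]; exact WithTop.coe_le_coe.2 le_top)
  have hd : HasFDerivAt (fderiv ℝ F) (fderiv ℝ (fderiv ℝ F) (t, θ)) (t, θ) :=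
    ((hf.cd_fderiv.contDiffAt ((isOpen_strip Tm Tp).mem_nhds
      ⟨ht, mem_univ _⟩)).differentiableAt (by simp)).hasFDerivAt
  have key : ∀ v w : ℝ × ℝ, fderiv ℝ (fun p => fderiv ℝ F p v) (t, θ) w
      = fderiv ℝ (fderiv ℝ F) (t, θ) w v := by
    intro v w
    rw [(hd.clm_apply (hasFDerivAt_const v _)).fderiv]
    simp
  have e1 : ∀ᶠ p : ℝ × ℝ in nhds (t, θ), p ∈ Ioo Tm Tp ×ˢ (univ : Set ℝ) :=
    (isOpen_strip Tm Tp).mem_nhds ⟨ht, mem_univ _⟩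
  have e2 : (fun p : ℝ × ℝ => _root_.pth f p.1 p.2) =ᶠ[nhds (t, θ)]
      fun p => fderiv ℝ F p (0, 1) := e1.mono fun p hp => hf.pth_eq hp.1
  have e3 : (fun p : ℝ × ℝ => _root_.pt f p.1 p.2) =ᶠ[nhds (t, θ)]
      fun p => fderiv ℝ F p (1, 0) := e1.mono fun p hp => hf.pt_eq hp.1
  rw [hf.pth.pt_eq ht, hf.pt.pth_eq ht, e2.fderiv_eq, e3.fderiv_eq, key, key]
  exact hsym.eq _ _

theorem const (c : ℝ) : Sm Tm Tp (fun _ _ => c) := ⟨contDiffOn_const, fun _ _ => rfl⟩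

theorem time : Sm Tm Tp (fun t _ => t) := ⟨contDiffOn_fst, fun _ _ => rfl⟩

theorem add (hf : Sm Tm Tp f) (hg : Sm Tm Tp g) : Sm Tm Tp (fun t θ => f t θ + g t θ) :=
  ⟨hf.cd.add hg.cd, fun t θ => by rw [hf.per, hg.per]⟩

theorem sub (hf : Sm Tm Tp f) (hg : Sm Tm Tp g) : Sm Tm Tp (fun t θ => f t θ - g t θ) :=
  ⟨hf.cd.sub hg.cd, fun t θ => by rw [hf.per, hg.per]⟩

theorem mul (hf : Sm Tm Tp f) (hg : Sm Tm Tp g) : Sm Tm Tp (fun t θ => f t θ * g t θ) :=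
  ⟨hf.cd.mul hg.cd, fun t θ => by rw [hf.per, hg.per]⟩

theorem sq (hf : Sm Tm Tp f) : Sm Tm Tp (fun t θ => f t θ ^ 2) :=
  ⟨hf.cd.pow 2, fun t θ => by rw [hf.per]⟩

theorem exp (hf : Sm Tm Tp f) : Sm Tm Tp (fun t θ => Real.exp (f t θ)) :=
  ⟨hf.cd.exp, fun t θ => by rw [hf.per]⟩

theorem inv (hf : Sm Tm Tp f) (h0 : ∀ t ∈ Ioo Tm Tp, ∀ θ, f t θ ≠ 0) :
    Sm Tm Tp (fun t θ => (f t θ)⁻¹) :=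
  ⟨hf.cd.inv fun p hp => h0 p.1 hp.1 p.2, fun t θ => by rw [hf.per]⟩

theorem sqrt (hf : Sm Tm Tp f) (h0 : ∀ t ∈ Ioo Tm Tp, ∀ θ, f t θ ≠ 0) :
    Sm Tm Tp (fun t θ => √(f t θ)) :=
  ⟨hf.cd.sqrt fun p hp => h0 p.1 hp.1 p.2, fun t θ => by rw [hf.per]⟩

theorem log (hf : Sm Tm Tp f) (h0 : ∀ t ∈ Ioo Tm Tp, ∀ θ, f t θ ≠ 0) :
    Sm Tm Tp (fun t θ => Real.log (f t θ)) :=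
  ⟨hf.cd.log fun p hp => h0 p.1 hp.1 p.2, fun t θ => by rw [hf.per]⟩

theorem continuous_slice (hf : Sm Tm Tp f) {t : ℝ} (ht : t ∈ Ioo Tm Tp) :
    Continuous (fun x => f t x) :=
  continuous_iff_continuousAt.2 fun θ => (hf.hasTh ht θ).continuousAt

theorem exists_mem_period (hf : Sm Tm Tp f) (θ : ℝ) :
    ∃ x ∈ Icc (0 : ℝ) (2 * π), ∀ t, f t θ = f t x := by
  refine ⟨toIcoMod two_pi_pos 0 θ, ?_, fun t => ?_⟩
  · have := toIcoMod_mem_Ico two_pi_pos 0 θ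
    simp only [zero_add] at this
    exact ⟨this.1, this.2.le⟩
  · have hp : Function.Periodic (f t) (2 * π) := hf.per t
    exact (hp.sub_zsmul_eq _).symm

/-- A smooth periodic function is bounded on compact time intervals. -/
theorem bdd_compact (hf : Sm Tm Tp f) {a b : ℝ} (ha : Tm < a) (hb : b < Tp) :
    ∃ C, ∀ t ∈ Icc a b, ∀ θ, |f t θ| ≤ C := by
  have hK : IsCompact (Icc a b ×ˢ Icc (0 : ℝ) (2 * π)) := isCompact_Icc.prod isCompact_Icc
  have hsub : Icc a b ×ˢ Icc (0 : ℝ) (2 * π) ⊆ Ioo Tm Tp ×ˢ (univ : Set ℝ) := by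
    rintro ⟨t, θ⟩ ⟨ht, -⟩
    exact ⟨⟨ha.trans_le ht.1, ht.2.trans_lt hb⟩, mem_univ _⟩
  obtain ⟨C, hC⟩ := hK.exists_bound_of_continuousOn (hf.cd.continuousOn.mono hsub)
  refine ⟨C, fun t ht θ => ?_⟩
  obtain ⟨x, hx, hfx⟩ := hf.exists_mem_period θ
  rw [hfx]
  exact hC (t, x) ⟨ht, hx⟩

/-- Differentiation under the integral over the circle. -/
theorem hasDerivAt_integral (hf : Sm Tm Tp f) {t : ℝ} (ht : t ∈ Ioo Tm Tp) :
    HasDerivAt (fun s => ∫ θ in (0 : ℝ)..(2 * π), f s θ)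
      (∫ θ in (0 : ℝ)..(2 * π), _root_.pt f t θ) t := by
  obtain ⟨a, ha1, ha2⟩ := exists_between ht.1
  obtain ⟨b, hb1, hb2⟩ := exists_between ht.2
  obtain ⟨C, hC⟩ := hf.pt.bdd_compact ha1 hb2
  refine (intervalIntegral.hasDerivAt_integral_of_dominated_loc_of_deriv_le
    (F' := fun s θ => _root_.pt f s θ) (bound := fun _ => C)
    (Icc_mem_nhds ha2 hb1) ?_ ?_ ?_ ?_ ?_ ?_).2
  · filter_upwards [isOpen_Ioo.mem_nhds ht] with s hs
    exact (hf.continuous_slice hs).aestronglyMeasurable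
  · exact (hf.continuous_slice ht).intervalIntegrable _ _
  · exact (hf.pt.continuous_slice ht).aestronglyMeasurable
  · exact Eventually.of_forall fun θ _ s hs => hC s hs θ
  · exact intervalIntegrable_const
  · exact Eventually.of_forall fun θ _ s hs =>
      hf.hasT ⟨ha1.trans_le hs.1, hs.2.trans_lt hb2⟩ θ

theorem integral_pth (hf : Sm Tm Tp f) {t : ℝ} (ht : t ∈ Ioo Tm Tp) :
    ∫ θ in (0 : ℝ)..(2 * π), _root_.pth f t θ = 0 := by
  rw [intervalIntegral.integral_eq_sub_of_hasDerivAt (f := fun x => f t x)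
    (fun x _ => hf.hasTh ht x) ((hf.pth.continuous_slice ht).intervalIntegrable _ _)]
  have := hf.per t 0
  simp only [zero_add] at this
  rw [this, sub_self]

/-- The oscillation over the circle is at most the integral of a bound on the derivative. -/
theorem osc_le (hf : Sm Tm Tp f) {t : ℝ} (ht : t ∈ Ioo Tm Tp) {h : ℝ → ℝ} (hc : Continuous h)
    (hb : ∀ θ, |_root_.pth f t θ| ≤ h θ) (x y : ℝ) :
    f t x - f t y ≤ ∫ θ in (0 : ℝ)..(2 * π), h θ := by
  obtain ⟨x', hx, hfx⟩ := hf.exists_mem_period x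
  obtain ⟨y', hy, hfy⟩ := hf.exists_mem_period y
  rw [hfx, hfy]
  have hfi : ∀ a b, IntervalIntegrable (fun θ => _root_.pth f t θ) volume a b := fun a b =>
    (hf.pth.continuous_slice ht).intervalIntegrable _ _
  have e : f t x' - f t y' = ∫ θ in y'..x', _root_.pth f t θ :=
    (intervalIntegral.integral_eq_sub_of_hasDerivAt (f := fun x => f t x)
    (fun x _ => hf.hasTh ht x) (hfi _ _)).symm
  rw [e]
  have h0 : ∀ θ, 0 ≤ h θ := fun θ => (abs_nonneg _).trans (hb θ)
  have gen : ∀ a b, a ∈ Icc (0 : ℝ) (2 * π) → b ∈ Icc (0 : ℝ) (2 * π) → a ≤ b →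
      |∫ θ in a..b, _root_.pth f t θ| ≤ ∫ θ in (0 : ℝ)..(2 * π), h θ := by
    intro a b ha hb' hab
    calc |∫ θ in a..b, _root_.pth f t θ| ≤ ∫ θ in a..b, |_root_.pth f t θ| :=
          intervalIntegral.abs_integral_le_integral_abs hab
      _ ≤ ∫ θ in a..b, h θ := intervalIntegral.integral_mono_on hab (hfi a b).abs
          (hc.intervalIntegrable _ _) fun θ _ => hb θ
      _ ≤ _ := intervalIntegral.integral_mono_interval ha.1 hab hb'.2
          (Eventually.of_forall h0) (hc.intervalIntegrable _ _)
  rcases le_total y' x' with h | h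
  · exact (le_abs_self _).trans (gen _ _ hy hx h)
  · rw [intervalIntegral.integral_symm]
    exact (neg_le_abs _).trans (gen _ _ hx hy h)

end Sm

/-! ### Maximum principle for the pair of null transport equations -/

/-- `e` is one of the two signs labelling the null directions. -/
def IsSign (e : ℝ) : Prop := e = 1 ∨ e = -1

theorem IsSign.neg {e : ℝ} (he : IsSign e) : IsSign (-e) := by
  rcases he with rfl | rfl <;> simp [IsSign]

theorem IsSign.sq {e : ℝ} (he : IsSign e) : e ^ 2 = 1 := by
  rcases he with rfl | rfl <;> norm_num

section
variable {Tm Tp : ℝ}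

/-- Barrier argument towards the past: a pair of functions lying below `B` at time `b` stays below
`B` as long as, at a touching point which is a spatial maximum of the pair, the time derivative
exceeds that of `B`. -/
theorem barrier_past {g : ℝ → ℝ → ℝ → ℝ} (hg : ∀ e, IsSign e → Sm Tm Tp (g e))
    {a b : ℝ} (ha : Tm < a) (hb : b < Tp) {B B' : ℝ → ℝ}
    (hB : ∀ t ∈ Icc a b, HasDerivAt B (B' t) t)
    (h0 : ∀ e, IsSign e → ∀ θ, g e b θ < B b)
    (hstep : ∀ t ∈ Icc a b, ∀ e, IsSign e → ∀ θ, g e t θ = B t → pth (g e) t θ = 0 →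
      (∀ e', IsSign e' → ∀ x, g e' t x ≤ B t) → B' t < pt (g e) t θ) :
    ∀ t ∈ Icc a b, ∀ e, IsSign e → ∀ θ, g e t θ < B t := by
  by_contra! hcon
  obtain ⟨t₁, ht₁, e₁, he₁, θ₁, hle₁⟩ := hcon
  have hmem : ∀ t ∈ Icc a b, t ∈ Ioo Tm Tp := fun t ht => ⟨ha.trans_le ht.1, ht.2.trans_lt hb⟩
  -- the compact set of times at which `g e` reaches the barrier
  let Z : ℝ → Set ℝ := fun e =>
    Prod.fst '' {p : ℝ × ℝ | p ∈ Icc a b ×ˢ Icc (0 : ℝ) (2 * π) ∧ B p.1 ≤ g e p.1 p.2}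
  have hZc : ∀ e, IsSign e → IsCompact (Z e) := by
    intro e he
    refine IsCompact.image ?_ continuous_fst
    have hK : IsCompact (Icc a b ×ˢ Icc (0 : ℝ) (2 * π)) := isCompact_Icc.prod isCompact_Icc
    refine hK.of_isClosed_subset ?_ fun p hp => hp.1
    refine IsClosed.isClosed_le hK.isClosed (f := fun p : ℝ × ℝ => B p.1)
      (g := fun p : ℝ × ℝ => g e p.1 p.2) ?_ ?_
    · intro p hp
      exact ((hB p.1 hp.1).continuousAt.comp continuousAt_fst).continuousWithinAt
    · exact (hg e he).cd.continuousOn.mono fun p hp => ⟨hmem p.1 hp.1, mem_univ _⟩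
  have hZmem : ∀ e, IsSign e → ∀ t ∈ Icc a b, ∀ θ, B t ≤ g e t θ → t ∈ Z e := by
    intro e he t ht θ hle
    obtain ⟨x, hx, hgx⟩ := (hg e he).exists_mem_period θ
    exact ⟨(t, x), ⟨⟨ht, hx⟩, by simpa [hgx] using hle⟩, rfl⟩
  have hs1 : IsSign 1 := Or.inl rfl
  have hs2 : IsSign (-1) := Or.inr rfl
  have hZ : ∀ e, IsSign e → Z e ⊆ Z 1 ∪ Z (-1) := by
    rintro e (rfl | rfl)
    · exact subset_union_left
    · exact subset_union_right
  obtain ⟨ts, hts⟩ := ((hZc 1 hs1).union (hZc (-1) hs2)).exists_isGreatest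
    ⟨t₁, hZ e₁ he₁ (hZmem e₁ he₁ t₁ ht₁ θ₁ hle₁)⟩
  obtain ⟨e, he, hze⟩ : ∃ e, IsSign e ∧ ts ∈ Z e := by
    rcases hts.1 with h | h
    · exact ⟨1, hs1, h⟩
    · exact ⟨-1, hs2, h⟩
  obtain ⟨⟨t, θ⟩, ⟨⟨hta, -⟩, hle⟩, rfl⟩ := hze
  simp only at hta hle hts
  have htb : t < b := by
    refine lt_of_le_of_ne hta.2 ?_
    rintro rfl
    exact absurd hle (not_le.2 (h0 e he θ))
  have hafter : ∀ s ∈ Ioc t b, ∀ e', IsSign e' → ∀ x, g e' s x < B s := by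
    intro s hs e' he' x
    by_contra! hc
    have := hts.2 (hZ e' he' (hZmem e' he' s ⟨hta.1.trans hs.1.le, hs.2⟩ x hc))
    exact absurd hs.1 (not_lt.2 this)
  have hnear : ∀ᶠ s in nhdsWithin t (Ioi t), s ∈ Ioc t b := Ioc_mem_nhdsGT htb
  have hat : ∀ e', IsSign e' → ∀ x, g e' t x ≤ B t := by
    intro e' he' x
    refine le_of_tendsto_of_tendsto
      (((hg e' he').hasT (hmem t hta) x).continuousAt.continuousWithinAt (s := Ioi t))
      ((hB t hta).continuousAt.continuousWithinAt (s := Ioi t)) ?_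
    filter_upwards [hnear] with s hs using (hafter s hs e' he' x).le
  have heq : g e t θ = B t := le_antisymm (hat e he θ) hle
  have hmax : IsLocalMax (fun x => g e t x) θ :=
    Eventually.of_forall fun x => by simpa [heq] using hat e he x
  have hlt := hstep t hta e he θ heq hmax.deriv_eq_zero hat
  have hder := (((hg e he).hasT (hmem t hta) θ).sub (hB t hta)).hasDerivWithinAt (s := Ioi t)
  rw [hasDerivWithinAt_iff_tendsto_slope' (by simp)] at hder
  have := le_of_tendsto hder (b := 0) (by
    filter_upwards [hnear] with s hs
    rw [slope_def_field]
    refine div_nonpos_of_nonpos_of_nonneg ?_ (sub_nonneg.2 hs.1.le)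
    have := hafter s hs e he θ
    simp only [Pi.sub_apply, heq]
    linarith)
  linarith

/-- Light-cone estimate: a pair of quantities transported along the two null directions, with a
growth rate towards the past dominated by a constant plus a multiple of `-w'` for a bounded
decreasing function `w`, remains bounded above. -/
theorem light_cone_bound {g : ℝ → ℝ → ℝ → ℝ} (hg : ∀ e, IsSign e → Sm Tm Tp (g e))
    (hTm : 0 < Tm) {b : ℝ} (hTb : Tm < b) (hb : b < Tp) {w w' : ℝ → ℝ} {r : ℝ → ℝ → ℝ} {κ c W : ℝ}
    (hκ : 0 ≤ κ) (hc : 0 ≤ c) (hw : ∀ t ∈ Ioc Tm b, HasDerivAt w (w' t) t)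
    (hw' : ∀ t ∈ Ioc Tm b, w' t ≤ 0) (hW : ∀ t ∈ Ioc Tm b, |w t| ≤ W)
    (hD : ∀ t ∈ Ioc Tm b, ∀ e, IsSign e → ∀ θ,
      (κ * w' t - c) * (1 + g e t θ + g (-e) t θ) ≤ pt (g e) t θ + -e * r t θ * pth (g e) t θ) :
    ∃ C, ∀ t ∈ Ioc Tm b, ∀ e, IsSign e → ∀ θ, g e t θ ≤ C := by
  obtain ⟨C₁, hC₁⟩ := (hg 1 (Or.inl rfl)).bdd_compact hTb hb
  obtain ⟨C₂, hC₂⟩ := (hg (-1) (Or.inr rfl)).bdd_compact hTb hb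
  set M := max C₁ C₂ with hM
  have hMb : ∀ e, IsSign e → ∀ θ, g e b θ ≤ M := by
    rintro e (rfl | rfl) θ
    · exact (le_abs_self _).trans ((hC₁ b ⟨le_rfl, le_rfl⟩ θ).trans (le_max_left _ _))
    · exact (le_abs_self _).trans ((hC₂ b ⟨le_rfl, le_rfl⟩ θ).trans (le_max_right _ _))
  have hM0 : 0 ≤ M := (abs_nonneg _).trans ((hC₁ b ⟨le_rfl, le_rfl⟩ 0).trans (le_max_left _ _))
  set K := (1 + M) * exp (3 * κ * W + 3 * (c + 1) * b) with hK
  have hK0 : 0 < K := by positivity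
  set B : ℝ → ℝ := fun t => K * exp (3 * κ * w t - 3 * (c + 1) * t) with hB
  have hBlow : ∀ t ∈ Ioc Tm b, 1 + M ≤ B t := by
    intro t ht
    have h1 : 0 ≤ 3 * κ * W + 3 * (c + 1) * b + (3 * κ * w t - 3 * (c + 1) * t) := by
      have h2 : 0 ≤ W + w t := by have := (abs_le.1 (hW t ht)).1; linarith
      have h3 : 0 ≤ b - t := sub_nonneg.2 ht.2
      have h4 : 0 ≤ κ * (W + w t) := by positivity
      have h5 : 0 ≤ (c + 1) * (b - t) := by positivity
      linarith
    have h2 : 1 ≤ exp (3 * κ * W + 3 * (c + 1) * b) * exp (3 * κ * w t - 3 * (c + 1) * t) := by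
      rw [← exp_add]; exact one_le_exp h1
    simp only [hB, hK, mul_assoc]
    exact le_mul_of_one_le_right (by positivity) (by simpa [mul_assoc] using h2)
  refine ⟨K * exp (3 * κ * W), fun t ht e he θ => ?_⟩
  have hsub : ∀ s ∈ Icc t b, s ∈ Ioc Tm b := fun s hs => ⟨ht.1.trans_le hs.1, hs.2⟩
  have hlt := barrier_past hg ht.1 hb (B := B)
    (B' := fun s => B s * (3 * κ * w' s - 3 * (c + 1))) ?_ ?_ ?_ t ⟨le_rfl, ht.2⟩ e he θ
  · refine hlt.le.trans ?_
    simp only [hB]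
    gcongr
    have h2 : 0 ≤ W - w t := by have := (abs_le.1 (hW t ht)).2; linarith
    have h4 : 0 ≤ κ * (W - w t) := by positivity
    have h5 : 0 ≤ (c + 1) * t := mul_nonneg (by linarith) (hTm.trans ht.1).le
    linarith
  · intro s hs
    have h : HasDerivAt (fun s => 3 * κ * w s - 3 * (c + 1) * s)
        (3 * κ * w' s - 3 * (c + 1) * 1) s :=
      ((hw s (hsub s hs)).const_mul (3 * κ)).sub ((hasDerivAt_id s).const_mul (3 * (c + 1)))
    refine (h.exp.const_mul K).congr_deriv ?_
    simp only [hB]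
    ring
  · intro e he θ
    have := hBlow b ⟨hTb, le_rfl⟩
    have := hMb e he θ
    linarith
  · intro s hs e he θ heq hpth hall
    have hs' := hsub s hs
    have hd := hD s hs' e he θ
    rw [hpth, mul_zero, add_zero] at hd
    refine lt_of_lt_of_le ?_ hd
    have h1 := hall (-e) he.neg θ
    have h2 := hBlow s hs'
    have h3 : κ * w' s - c ≤ 0 := by
      have := mul_nonpos_of_nonneg_of_nonpos hκ (hw' s hs'); linarith
    have h4 : (κ * w' s - c) * (3 * B s) ≤ (κ * w' s - c) * (1 + g e s θ + g (-e) s θ) :=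
      mul_le_mul_of_nonpos_left (by linarith) h3
    refine lt_of_lt_of_le ?_ h4
    have : 0 < B s := by linarith
    nlinarith

end

/-! ### Null derivatives and the energy densities -/

/-- Derivative along the straight line through `(t, θ)` with slope `v`. -/
theorem Sm.hasLine {Tm Tp : ℝ} {f : ℝ → ℝ → ℝ} (hf : Sm Tm Tp f) {t : ℝ} (ht : t ∈ Ioo Tm Tp)
    (θ v : ℝ) :
    HasDerivAt (fun s => f (t + s) (θ + v * s)) (_root_.pt f t θ + v * _root_.pth f t θ) 0 := by
  have h1 : HasDerivAt (fun s : ℝ => (t + s, θ + v * s)) ((1 : ℝ), v) 0 := by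
    have h2 : HasDerivAt (fun s : ℝ => t + s) 1 0 := (hasDerivAt_id 0).const_add t
    have h3 : HasDerivAt (fun s : ℝ => θ + v * s) v 0 := by
      simpa using ((hasDerivAt_id (0 : ℝ)).const_mul v).const_add θ
    exact h2.prodMk h3
  have h4 := (hf.fd (θ := θ) ht).comp_hasDerivAt_of_eq 0 h1 (by simp)
  refine h4.congr_deriv ?_
  rw [hf.pt_eq ht, hf.pth_eq ht]
  have : ((1 : ℝ), v) = (1, 0) + v • ((0 : ℝ), (1 : ℝ)) := by simp
  rw [this, map_add, map_smul, smul_eq_mul]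

namespace GowdySolution
variable {Q lam Tm Tp : ℝ} (G : GowdySolution Q lam Tm Tp)

theorem smη : Sm Tm Tp G.η := ⟨G.smooth _ (by simp), G.periodic _ (by simp)⟩
theorem smα : Sm Tm Tp G.α := ⟨G.smooth _ (by simp), G.periodic _ (by simp)⟩
theorem smU : Sm Tm Tp G.U := ⟨G.smooth _ (by simp), G.periodic _ (by simp)⟩
theorem smA : Sm Tm Tp G.A := ⟨G.smooth _ (by simp), G.periodic _ (by simp)⟩
theorem smφ : Sm Tm Tp G.φ := ⟨G.smooth _ (by simp), G.periodic _ (by simp)⟩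
theorem smσ : Sm Tm Tp G.σ := ⟨G.smooth _ (by simp), G.periodic _ (by simp)⟩

/-- The characteristic speed `√α`. -/
def r (t θ : ℝ) : ℝ := √(G.α t θ)

/-- The potential `N = α Q² exp(2λφ + 2(η - U))`. -/
def N (t θ : ℝ) : ℝ :=
  G.α t θ * Q ^ 2 * exp (2 * lam * G.φ t θ + 2 * (G.η t θ - G.U t θ))

/-- The null derivative `∂_t + e √α ∂_θ`, with `e = ±1`. -/
def D (e : ℝ) (f : ℝ → ℝ → ℝ) (t θ : ℝ) : ℝ := pt f t θ + e * G.r t θ * pth f t θ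

/-- The energy density of the null derivatives in the direction `e`. -/
def dens (e t θ : ℝ) : ℝ :=
  (G.D e G.U t θ) ^ 2 + exp (4 * G.U t θ) / (4 * t ^ 2) * (G.D e G.A t θ) ^ 2
  + (1 / 4) * ((G.D e G.φ t θ) ^ 2 + exp (2 * lam * G.φ t θ) * (G.D e G.σ t θ) ^ 2)

/-- The bilinear pairing of the two null directions; `A` enters with the opposite sign. -/
def cross (e t θ : ℝ) : ℝ :=
  G.D e G.U t θ * G.D (-e) G.U t θ
  - exp (4 * G.U t θ) / (4 * t ^ 2) * (G.D e G.A t θ * G.D (-e) G.A t θ)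
  + (1 / 4) * (G.D e G.φ t θ * G.D (-e) G.φ t θ
    + exp (2 * lam * G.φ t θ) * (G.D e G.σ t θ * G.D (-e) G.σ t θ))

section
variable {G}

theorem α_pos {t : ℝ} (ht : t ∈ Ioo Tm Tp) (θ : ℝ) : 0 < G.α t θ := G.sys.alpha_pos t ht θ

theorem r_pos {t : ℝ} (ht : t ∈ Ioo Tm Tp) (θ : ℝ) : 0 < G.r t θ := sqrt_pos.2 (α_pos ht θ)

theorem r_sq {t : ℝ} (ht : t ∈ Ioo Tm Tp) (θ : ℝ) : G.r t θ ^ 2 = G.α t θ :=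
  sq_sqrt (α_pos ht θ).le

theorem N_pos (hQ : Q ≠ 0) {t : ℝ} (ht : t ∈ Ioo Tm Tp) (θ : ℝ) : 0 < G.N t θ := by
  have := α_pos (G := G) ht θ
  unfold N; positivity

end

theorem smr : Sm Tm Tp G.r := G.smα.sqrt fun _ ht θ => (α_pos ht θ).ne'

theorem smN : Sm Tm Tp G.N :=
  (G.smα.mul (Sm.const _)).mul
    ((((Sm.const (2 * lam)).mul G.smφ).add ((Sm.const 2).mul (G.smη.sub G.smU))).exp)

theorem smD (e : ℝ) {f : ℝ → ℝ → ℝ} (hf : Sm Tm Tp f) : Sm Tm Tp (G.D e f) :=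
  hf.pt.add (((Sm.const e).mul G.smr).mul hf.pth)

theorem smT (hTm : 0 < Tm) : Sm Tm Tp (fun t _ => (4 * t ^ 2)⁻¹) :=
  ((Sm.const 4).mul Sm.time.sq).inv fun t ht _ => by
    have : 0 < t := hTm.trans ht.1
    positivity

theorem smExpU : Sm Tm Tp (fun t θ => exp (4 * G.U t θ)) := ((Sm.const 4).mul G.smU).exp

theorem smExpφ : Sm Tm Tp (fun t θ => exp (2 * lam * G.φ t θ)) :=
  ((Sm.const (2 * lam)).mul G.smφ).exp

theorem smDens (hTm : 0 < Tm) (e : ℝ) : Sm Tm Tp (G.dens e) :=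
  (((G.smD e G.smU).sq).add ((G.smExpU.mul (smT hTm)).mul (G.smD e G.smA).sq)).add
    ((Sm.const (1 / 4)).mul ((G.smD e G.smφ).sq.add (G.smExpφ.mul (G.smD e G.smσ).sq)))

theorem dens_nonneg (e t θ : ℝ) : 0 ≤ G.dens e t θ := by unfold dens; positivity

section identities
variable {G}

theorem pt_α {t : ℝ} (ht : t ∈ Ioo Tm Tp) (θ : ℝ) :
    pt G.α t θ = - t * G.N t θ * G.α t θ := by
  rw [G.sys.constraint_α t ht θ, N]; ring

theorem pt_r {t : ℝ} (ht : t ∈ Ioo Tm Tp) (θ : ℝ) :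
    pt G.r t θ = - (t * G.N t θ / 2) * G.r t θ := by
  have h := ((G.smα.hasT ht θ).sqrt (α_pos ht θ).ne').deriv
  have hr := r_pos (G := G) ht θ
  have h2 := r_sq (G := G) ht θ
  change pt G.r t θ = pt G.α t θ / (2 * G.r t θ) at h
  rw [h, pt_α ht θ, ← h2]
  field_simp

theorem pth_r {t : ℝ} (ht : t ∈ Ioo Tm Tp) (θ : ℝ) :
    G.r t θ * pth G.r t θ = pth G.α t θ / 2 := by
  have h := ((G.smα.hasTh ht θ).sqrt (α_pos ht θ).ne').deriv
  have hr := r_pos (G := G) ht θ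
  change pth G.r t θ = pth G.α t θ / (2 * G.r t θ) at h
  rw [h]
  field_simp

/-- The wave operator factors through the null derivatives; the lower order terms containing `α̇`
and `α'` combine into a single multiple of the null derivative. -/
theorem null_wave {X : ℝ → ℝ → ℝ} (hX : Sm Tm Tp X) {t : ℝ} (ht : t ∈ Ioo Tm Tp) (θ : ℝ)
    {e : ℝ} (he : IsSign e) {c : ℝ}
    (h : pt (pt X) t θ - G.α t θ * pth (pth X) t θ
      = c + pt G.α t θ * pt X t θ / (2 * G.α t θ) + pth G.α t θ * pth X t θ / 2) :
    G.D (-e) (G.D e X) t θ = c - t * G.N t θ / 2 * G.D e X t θ := by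
  have hr := r_pos (G := G) ht θ
  have h1 : pt (G.D e X) t θ = pt (pt X) t θ + (e * pt G.r t θ * pth X t θ
      + e * G.r t θ * pt (pth X) t θ) :=
    ((hX.pt.hasT ht θ).add (((G.smr.hasT ht θ).const_mul e).mul (hX.pth.hasT ht θ))).deriv
  have h2 : pth (G.D e X) t θ = pth (pt X) t θ + (e * pth G.r t θ * pth X t θ
      + e * G.r t θ * pth (pth X) t θ) :=
    ((hX.pt.hasTh ht θ).add (((G.smr.hasTh ht θ).const_mul e).mul (hX.pth.hasTh ht θ))).deriv
  have h3 := hX.comm ht θ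
  have h4 := pth_r (G := G) ht θ
  have h5 := r_sq (G := G) ht θ
  have h6 : pt G.α t θ * pt X t θ / (2 * G.α t θ) = - (t * G.N t θ / 2) * pt X t θ := by
    have := α_pos (G := G) ht θ
    rw [pt_α ht θ]; field_simp
  have h7 := he.sq
  have e1 : G.D (-e) (G.D e X) t θ = pt (G.D e X) t θ + -e * G.r t θ * pth (G.D e X) t θ := rfl
  have e2 : G.D e X t θ = pt X t θ + e * G.r t θ * pth X t θ := rfl
  rw [e1, h1, h2, e2, pt_r ht θ, h3]
  rw [h6] at h
  linear_combination h - (pth X t θ) * e ^ 2 * h4 - pth (pth X) t θ * e ^ 2 * h5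
    - (pth G.α t θ / 2 * pth X t θ + G.α t θ * pth (pth X) t θ) * h7

theorem D_mul {X Y : ℝ → ℝ → ℝ} {t : ℝ} (ht : t ∈ Ioo Tm Tp) (θ : ℝ) {e : ℝ} (he : IsSign e) :
    pt X t θ * pt Y t θ - G.α t θ * (pth X t θ * pth Y t θ)
      = (G.D e X t θ * G.D (-e) Y t θ + G.D (-e) X t θ * G.D e Y t θ) / 2 := by
  simp only [D]
  linear_combination (pth X t θ * pth Y t θ) * (r_sq (G := G) ht θ)
    + (pth X t θ * pth Y t θ) * G.r t θ ^ 2 * he.sq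

theorem D_sq {X : ℝ → ℝ → ℝ} {t : ℝ} (ht : t ∈ Ioo Tm Tp) (θ : ℝ) {e : ℝ} (he : IsSign e) :
    pt X t θ ^ 2 - G.α t θ * pth X t θ ^ 2 = G.D e X t θ * G.D (-e) X t θ := by
  linear_combination D_mul (G := G) (X := X) (Y := X) ht θ he

theorem D_half (X : ℝ → ℝ → ℝ) (t θ e : ℝ) :
    pt X t θ = (G.D e X t θ + G.D (-e) X t θ) / 2 := by
  simp only [D]; ring

theorem wave_U {t : ℝ} (ht : t ∈ Ioo Tm Tp) (θ : ℝ) {e : ℝ} (he : IsSign e) :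
    G.D (-e) (G.D e G.U) t θ
      = - ((G.D e G.U t θ + G.D (-e) G.U t θ) / 2) / t
        + exp (4 * G.U t θ) / (2 * t ^ 2) * (G.D e G.A t θ * G.D (-e) G.A t θ)
        + 1 / 4 * G.N t θ - t * G.N t θ / 2 * G.D e G.U t θ := by
  refine null_wave G.smU ht θ he ?_
  rw [G.sys.evol_U t ht θ, ← D_sq ht θ he, ← D_half, N]
  ring

theorem wave_A {t : ℝ} (ht : t ∈ Ioo Tm Tp) (θ : ℝ) {e : ℝ} (he : IsSign e) :
    G.D (-e) (G.D e G.A) t θ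
      = (G.D e G.A t θ + G.D (-e) G.A t θ) / 2 / t
        - 4 * ((G.D e G.A t θ * G.D (-e) G.U t θ + G.D (-e) G.A t θ * G.D e G.U t θ) / 2)
        - t * G.N t θ / 2 * G.D e G.A t θ := by
  refine null_wave G.smA ht θ he ?_
  rw [G.sys.evol_A t ht θ, ← D_mul ht θ he, ← D_half]
  ring

theorem wave_φ {t : ℝ} (ht : t ∈ Ioo Tm Tp) (θ : ℝ) {e : ℝ} (he : IsSign e) :
    G.D (-e) (G.D e G.φ) t θ
      = - ((G.D e G.φ t θ + G.D (-e) G.φ t θ) / 2) / t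
        + lam * exp (2 * lam * G.φ t θ) * (G.D e G.σ t θ * G.D (-e) G.σ t θ)
        - lam * G.N t θ - t * G.N t θ / 2 * G.D e G.φ t θ := by
  refine null_wave G.smφ ht θ he ?_
  rw [G.sys.evol_φ t ht θ, ← D_sq ht θ he, ← D_half, N]
  ring

theorem wave_σ {t : ℝ} (ht : t ∈ Ioo Tm Tp) (θ : ℝ) {e : ℝ} (he : IsSign e) :
    G.D (-e) (G.D e G.σ) t θ
      = - ((G.D e G.σ t θ + G.D (-e) G.σ t θ) / 2) / t
        - 2 * lam * ((G.D e G.φ t θ * G.D (-e) G.σ t θ + G.D (-e) G.φ t θ * G.D e G.σ t θ) / 2)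
        - t * G.N t θ / 2 * G.D e G.σ t θ := by
  refine null_wave G.smσ ht θ he ?_
  rw [G.sys.evol_σ t ht θ, ← D_mul ht θ he, ← D_half]
  ring

/-- Transport equation for the energy density; the wave-map nonlinearities cancel. -/
theorem transport (hTm : 0 < Tm) {t : ℝ} (ht : t ∈ Ioo Tm Tp) (θ : ℝ) {e : ℝ} (he : IsSign e) :
    G.D (-e) (G.dens e) t θ
      = - (t * G.N t θ) * G.dens e t θ - (G.dens e t θ + G.cross e t θ) / t
        + G.N t θ / 2 * (G.D e G.U t θ - lam * G.D e G.φ t θ) := by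
  have ht0 : t ≠ 0 := (hTm.trans ht.1).ne'
  have l := fun {X : ℝ → ℝ → ℝ} (hX : Sm Tm Tp X) => hX.hasLine ht θ (-e * G.r t θ)
  have lU := l (G.smD e G.smU)
  have lA := l (G.smD e G.smA)
  have lφ := l (G.smD e G.smφ)
  have lσ := l (G.smD e G.smσ)
  have lt : HasDerivAt (fun s : ℝ => 4 * (t + s) ^ 2) (4 * (2 * t)) 0 := by
    have h2 : HasDerivAt (fun s : ℝ => t + s) 1 0 := (hasDerivAt_id 0).const_add t
    exact ((h2.pow 2).const_mul 4).congr_deriv (by simp)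
  have key := ((((lU.pow 2).add ((((l G.smU).const_mul 4).exp.div lt (by simpa using ht0)).mul
    (lA.pow 2))).add (((lφ.pow 2).add ((((l G.smφ).const_mul (2 * lam)).exp).mul
      (lσ.pow 2))).const_mul (1 / 4))).unique (l (G.smDens hTm e))).symm
  change G.D (-e) (G.dens e) t θ = _ at key
  have f : ∀ X : ℝ → ℝ → ℝ, pt X t θ + -e * G.r t θ * pth X t θ = G.D (-e) X t θ := fun _ => rfl
  simp only [f, wave_U ht θ he, wave_A ht θ he, wave_φ ht θ he, wave_σ ht θ he, add_zero, mul_zero,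
    Pi.pow_apply, Pi.div_apply] at key
  rw [key]
  simp only [dens, cross]
  field_simp
  ring

end identities
end GowdySolution

namespace GowdySolution
variable {Q lam Tm Tp : ℝ} {G : GowdySolution Q lam Tm Tp}

/-! ### The constraints in terms of the energy densities -/

variable (G) in
/-- The full energy density of the fields, the mean of the two null densities. -/
def en (t θ : ℝ) : ℝ := (G.dens 1 t θ + G.dens (-1) t θ) / 2

variable (G) in
/-- The logarithmic angular derivative of the potential `N`. -/
def L (t θ : ℝ) : ℝ :=
  2 * lam * pth G.φ t θ - 2 * pth G.U t θ + t * (G.dens 1 t θ - G.dens (-1) t θ) * (G.r t θ)⁻¹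

theorem en_eq {t : ℝ} (ht : t ∈ Ioo Tm Tp) (θ : ℝ) :
    G.en t θ = (pt G.U t θ) ^ 2 + G.α t θ * (pth G.U t θ) ^ 2
      + exp (4 * G.U t θ) / (4 * t ^ 2) * ((pt G.A t θ) ^ 2 + G.α t θ * (pth G.A t θ) ^ 2)
      + (1 / 4) * ((pt G.φ t θ) ^ 2 + G.α t θ * (pth G.φ t θ) ^ 2
          + exp (2 * lam * G.φ t θ) * ((pt G.σ t θ) ^ 2 + G.α t θ * (pth G.σ t θ) ^ 2)) := by
  rw [← r_sq ht θ]
  simp only [en, dens, D]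
  ring

theorem cross_eq {t : ℝ} (ht : t ∈ Ioo Tm Tp) (θ : ℝ) :
    G.cross 1 t θ = (pt G.U t θ) ^ 2 - G.α t θ * (pth G.U t θ) ^ 2
      - exp (4 * G.U t θ) / (4 * t ^ 2) * ((pt G.A t θ) ^ 2 - G.α t θ * (pth G.A t θ) ^ 2)
      + (1 / 4) * ((pt G.φ t θ) ^ 2 - G.α t θ * (pth G.φ t θ) ^ 2
          + exp (2 * lam * G.φ t θ) * ((pt G.σ t θ) ^ 2 - G.α t θ * (pth G.σ t θ) ^ 2)) := by
  rw [← r_sq ht θ]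
  simp only [cross, D]
  ring

theorem cross_neg (t θ : ℝ) : G.cross (-1) t θ = G.cross 1 t θ := by
  simp only [cross, neg_neg]
  ring

theorem pt_η (hTm : 0 < Tm) {t : ℝ} (ht : t ∈ Ioo Tm Tp) (θ : ℝ) :
    pt G.η t θ = t * (G.en t θ + 1 / 4 * G.N t θ) := by
  have ht0 : t ≠ 0 := (hTm.trans ht.1).ne'
  have h := G.sys.constraint_t t ht θ
  rw [div_eq_iff ht0] at h
  rw [h, en_eq ht θ, N]
  ring

theorem pth_η (hTm : 0 < Tm) {t : ℝ} (ht : t ∈ Ioo Tm Tp) (θ : ℝ) :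
    pth G.η t θ = 1 / 2 * (t * (G.dens 1 t θ - G.dens (-1) t θ) * (G.r t θ)⁻¹)
      - 1 / 2 * (pth G.α t θ * (G.α t θ)⁻¹) := by
  have ht0 : t ≠ 0 := (hTm.trans ht.1).ne'
  have h := G.sys.constraint_θ t ht θ
  rw [div_eq_iff ht0] at h
  have hr := r_pos (G := G) ht θ
  have hα := α_pos (G := G) ht θ
  rw [h]
  simp only [dens, D]
  field_simp
  ring

theorem pt_N (hTm : 0 < Tm) {t : ℝ} (ht : t ∈ Ioo Tm Tp) (θ : ℝ) :
    pt G.N t θ = G.N t θ * (- (t * G.N t θ / 2) + 2 * t * G.en t θ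
      + 2 * lam * pt G.φ t θ - 2 * pt G.U t θ) := by
  have h := (((G.smα.hasT ht θ).mul_const (Q ^ 2)).mul
    (((G.smφ.hasT ht θ).const_mul (2 * lam)).add
      (((G.smη.hasT ht θ).sub (G.smU.hasT ht θ)).const_mul 2)).exp).deriv
  change pt G.N t θ = _ at h
  rw [h, pt_α ht θ, pt_η hTm ht θ]
  simp only [N, Pi.add_apply, Pi.sub_apply]
  ring

theorem pth_N (hTm : 0 < Tm) {t : ℝ} (ht : t ∈ Ioo Tm Tp) (θ : ℝ) :
    pth G.N t θ = G.N t θ * G.L t θ := by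
  have h := (((G.smα.hasTh ht θ).mul_const (Q ^ 2)).mul
    (((G.smφ.hasTh ht θ).const_mul (2 * lam)).add
      (((G.smη.hasTh ht θ).sub (G.smU.hasTh ht θ)).const_mul 2)).exp).deriv
  change pth G.N t θ = _ at h
  have hα := α_pos (G := G) ht θ
  rw [h, pth_η hTm ht θ]
  simp only [N, L, Pi.add_apply, Pi.sub_apply]
  field_simp
  ring

theorem smEn (hTm : 0 < Tm) : Sm Tm Tp G.en := by
  have h := ((G.smDens hTm 1).add (G.smDens hTm (-1))).mul (Sm.const (2⁻¹))
  exact h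

theorem smRinv : Sm Tm Tp (fun t θ => (G.r t θ)⁻¹) := G.smr.inv fun _ ht θ => (r_pos ht θ).ne'

theorem en_nonneg (t θ : ℝ) : 0 ≤ G.en t θ := by
  have h1 := G.dens_nonneg 1 t θ
  have h2 := G.dens_nonneg (-1) t θ
  unfold en; linarith

theorem pt_rinv {t : ℝ} (ht : t ∈ Ioo Tm Tp) (θ : ℝ) :
    pt (fun t θ => (G.r t θ)⁻¹) t θ = t * G.N t θ / 2 * (G.r t θ)⁻¹ := by
  have hr := r_pos (G := G) ht θ
  have h := ((G.smr.hasT ht θ).inv hr.ne').deriv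
  change pt (fun t θ => (G.r t θ)⁻¹) t θ = _ at h
  rw [h, pt_r ht θ]
  field_simp

/-! ### Energy estimates -/

theorem pt_dens (hTm : 0 < Tm) {t : ℝ} (ht : t ∈ Ioo Tm Tp) (θ : ℝ) {e : ℝ} (he : IsSign e) :
    pt (G.dens e) t θ = - (t * G.N t θ) * G.dens e t θ - (G.dens e t θ + G.cross e t θ) / t
        + G.N t θ / 2 * (G.D e G.U t θ - lam * G.D e G.φ t θ)
        + e * G.r t θ * pth (G.dens e) t θ := by
  rw [← transport hTm ht θ he, D]; ring

theorem pt_en (hTm : 0 < Tm) {t : ℝ} (ht : t ∈ Ioo Tm Tp) (θ : ℝ) :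
    pt (fun t θ => G.en t θ * (G.r t θ)⁻¹) t θ
      = pth (fun t θ => (G.dens 1 t θ - G.dens (-1) t θ) * 2⁻¹) t θ
        + (G.r t θ)⁻¹ * (- (t * G.N t θ / 2) * G.en t θ - (G.en t θ + G.cross 1 t θ) / t
          + G.N t θ / 2 * (pt G.U t θ - lam * pt G.φ t θ)) := by
  have hr := r_pos (G := G) ht θ
  have ht0 : t ≠ 0 := (hTm.trans ht.1).ne'
  have h := (((((G.smDens hTm 1).hasT ht θ).add ((G.smDens hTm (-1)).hasT ht θ)).div_const 2).mul
    (smRinv (G := G) |>.hasT ht θ)).deriv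
  change pt (fun t θ => G.en t θ * (G.r t θ)⁻¹) t θ = _ at h
  have h' := ((((G.smDens hTm 1).hasTh ht θ).sub
    ((G.smDens hTm (-1)).hasTh ht θ)).mul_const 2⁻¹).deriv
  change pth (fun t θ => (G.dens 1 t θ - G.dens (-1) t θ) * 2⁻¹) t θ = _ at h'
  rw [h, h', pt_dens hTm ht θ (Or.inl rfl), pt_dens hTm ht θ (Or.inr rfl), pt_rinv ht θ, cross_neg]
  simp only [D, en, Pi.add_apply]
  field_simp
  ring

theorem pt_enN (hTm : 0 < Tm) {t : ℝ} (ht : t ∈ Ioo Tm Tp) (θ : ℝ) :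
    pt (fun t θ => G.en t θ * (G.r t θ)⁻¹ + 1 / 4 * (G.N t θ * (G.r t θ)⁻¹)) t θ
      = pth (fun t θ => (G.dens 1 t θ - G.dens (-1) t θ) * 2⁻¹) t θ
        - (G.r t θ)⁻¹ * ((G.en t θ + G.cross 1 t θ) / t) := by
  have h := ((((smEn (G := G) hTm).mul (smRinv (G := G))).hasT ht θ).add
    (((G.smN.hasT ht θ).mul (smRinv (G := G) |>.hasT ht θ)).const_mul (1 / 4))).deriv
  change pt (fun t θ => G.en t θ * (G.r t θ)⁻¹ + 1 / 4 * (G.N t θ * (G.r t θ)⁻¹)) t θ = _ at h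
  rw [h, pt_en hTm ht θ, pt_N hTm ht θ, pt_rinv ht θ]
  ring

theorem cross_le_en {t : ℝ} (ht : t ∈ Ioo Tm Tp) (θ : ℝ) : G.cross 1 t θ ≤ G.en t θ := by
  rw [cross_eq ht θ, en_eq ht θ]
  have hα := α_pos (G := G) ht θ
  have h1 : 0 ≤ G.α t θ * (pth G.U t θ) ^ 2 := by positivity
  have h2 : 0 ≤ exp (4 * G.U t θ) / (4 * t ^ 2) * (pt G.A t θ) ^ 2 := by positivity
  have h3 : 0 ≤ G.α t θ * (pth G.φ t θ) ^ 2 := by positivity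
  have h4 : 0 ≤ exp (2 * lam * G.φ t θ) * (G.α t θ * (pth G.σ t θ) ^ 2) := by positivity
  linarith

/-- A function with nonnegative derivative increases. -/
theorem mono_past {f f' : ℝ → ℝ} {a b : ℝ} (hab : a ≤ b)
    (h : ∀ s ∈ Icc a b, HasDerivAt f (f' s) s) (h' : ∀ s ∈ Icc a b, 0 ≤ f' s) : f a ≤ f b := by
  have hm : MonotoneOn f (Icc a b) := monotoneOn_of_hasDerivWithinAt_nonneg (convex_Icc a b)
    (fun s hs => (h s hs).continuousAt.continuousWithinAt)
    (fun s hs => (h s (interior_subset hs)).hasDerivWithinAt)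
    (fun s hs => h' s (interior_subset hs))
  exact hm ⟨le_rfl, hab⟩ ⟨hab, le_rfl⟩ hab

section
variable {b : ℝ}

theorem mem_Ioo_of {t : ℝ} (hb : b < Tp) (ht : t ∈ Ioc Tm b) : t ∈ Ioo Tm Tp :=
  ⟨ht.1, ht.2.trans_lt hb⟩

theorem rinv_bound (hTm : 0 < Tm) (hQ : Q ≠ 0) (hTb : Tm < b) (hb : b < Tp) :
    ∃ C, ∀ t ∈ Ioc Tm b, ∀ θ, (G.r t θ)⁻¹ ≤ C := by
  obtain ⟨C, hC⟩ := (smRinv (G := G)).bdd_compact hTb hb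
  refine ⟨C, fun t ht θ => ?_⟩
  refine le_trans ?_ ((le_abs_self _).trans (hC b ⟨le_rfl, le_rfl⟩ θ))
  have hm : ∀ s ∈ Icc t b, s ∈ Ioo Tm Tp := fun s hs => ⟨ht.1.trans_le hs.1, hs.2.trans_lt hb⟩
  refine mono_past (f := fun s => (G.r s θ)⁻¹) ht.2
    (fun s hs => (smRinv (G := G)).hasT (hm s hs) θ) fun s hs => ?_
  rw [pt_rinv (hm s hs)]
  have h1 := N_pos (G := G) hQ (hm s hs) θ
  have h2 := r_pos (G := G) (hm s hs) θ
  have h3 : 0 < s := hTm.trans (hm s hs).1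
  positivity

/-- The energy of the fields is bounded towards the past. -/
theorem energy_bound (hTm : 0 < Tm) (hQ : Q ≠ 0) (hTb : Tm < b) (hb : b < Tp) :
    ∃ C, ∀ t ∈ Ioc Tm b, ∫ θ in (0 : ℝ)..(2 * π), G.en t θ * (G.r t θ)⁻¹ ≤ C := by
  have h1 : Sm Tm Tp (fun t θ => G.en t θ * (G.r t θ)⁻¹) := (smEn hTm).mul smRinv
  have h2 : Sm Tm Tp (fun t θ => G.en t θ * (G.r t θ)⁻¹ + 1 / 4 * (G.N t θ * (G.r t θ)⁻¹)) :=
    h1.add ((Sm.const (1 / 4)).mul (G.smN.mul smRinv))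
  have h3 : Sm Tm Tp (fun t θ => (G.dens 1 t θ - G.dens (-1) t θ) * 2⁻¹) :=
    ((G.smDens hTm 1).sub (G.smDens hTm (-1))).mul (Sm.const 2⁻¹)
  set F : ℝ → ℝ := fun t => ∫ θ in (0 : ℝ)..(2 * π),
    (G.en t θ * (G.r t θ)⁻¹ + 1 / 4 * (G.N t θ * (G.r t θ)⁻¹)) with hF
  have hpi : (0 : ℝ) ≤ 2 * π := by positivity
  have hEF : ∀ t ∈ Ioc Tm b, ∫ θ in (0 : ℝ)..(2 * π), G.en t θ * (G.r t θ)⁻¹ ≤ F t := by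
    intro t ht
    have ht' := mem_Ioo_of hb ht
    refine intervalIntegral.integral_mono_on hpi
      ((h1.continuous_slice ht').intervalIntegrable _ _)
      ((h2.continuous_slice ht').intervalIntegrable _ _) fun θ _ => ?_
    have := N_pos (G := G) hQ ht' θ
    have := r_pos (G := G) ht' θ
    have : 0 ≤ 1 / 4 * (G.N t θ * (G.r t θ)⁻¹) := by positivity
    linarith
  have hF0 : 0 ≤ F b := by
    refine intervalIntegral.integral_nonneg hpi fun θ _ => ?_
    have hb' : b ∈ Ioo Tm Tp := ⟨hTb, hb⟩
    have := N_pos (G := G) hQ hb' θ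
    have := r_pos (G := G) hb' θ
    have := en_nonneg (G := G) b θ
    positivity
  refine ⟨b ^ 2 * F b / Tm ^ 2, fun t ht => (hEF t ht).trans ?_⟩
  have hmem : ∀ s ∈ Icc t b, s ∈ Ioo Tm Tp := fun s hs => ⟨ht.1.trans_le hs.1, hs.2.trans_lt hb⟩
  have ht0 : 0 < t := hTm.trans ht.1
  have hmono := mono_past (f := fun s => s ^ 2 * F s) ht.2
    (fun s hs => ((hasDerivAt_pow 2 s).mul (h2.hasDerivAt_integral (hmem s hs)))) fun s hs => by
      have hs' := hmem s hs
      have hs0 : 0 < s := hTm.trans hs'.1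
      have key : -(2 / s) * F s ≤ ∫ θ in (0 : ℝ)..(2 * π),
          pt (fun t θ => G.en t θ * (G.r t θ)⁻¹ + 1 / 4 * (G.N t θ * (G.r t θ)⁻¹)) s θ := by
        have hz := h3.integral_pth hs'
        have hi1 := (h3.pth.continuous_slice hs').intervalIntegrable (μ := volume) 0 (2 * π)
        have hi2 := (h2.continuous_slice hs').intervalIntegrable (μ := volume) 0 (2 * π)
        have e1 : -(2 / s) * F s = ∫ θ in (0 : ℝ)..(2 * π),
            (pth (fun t θ => (G.dens 1 t θ - G.dens (-1) t θ) * 2⁻¹) s θ + -(2 / s) *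
            (G.en s θ * (G.r s θ)⁻¹ + 1 / 4 * (G.N s θ * (G.r s θ)⁻¹))) := by
          rw [intervalIntegral.integral_add hi1 (hi2.const_mul _), hz, zero_add,
            intervalIntegral.integral_const_mul]
        rw [e1]
        refine intervalIntegral.integral_mono_on hpi (hi1.add (hi2.const_mul _))
          ((h2.pt.continuous_slice hs').intervalIntegrable _ _) fun θ _ => ?_
        rw [pt_enN hTm hs' θ]
        have hr := r_pos (G := G) hs' θ
        have hN := N_pos (G := G) hQ hs' θ
        have hc := cross_le_en (G := G) hs' θ
        have h4 : 0 ≤ (G.r s θ)⁻¹ * (2 * (G.en s θ + 1 / 4 * G.N s θ)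
            - (G.en s θ + G.cross 1 s θ)) / s := by
          refine div_nonneg (mul_nonneg (by positivity) ?_) hs0.le
          linarith
        have h5 : (G.r s θ)⁻¹ * (2 * (G.en s θ + 1 / 4 * G.N s θ)
            - (G.en s θ + G.cross 1 s θ)) / s
            = - (G.r s θ)⁻¹ * ((G.en s θ + G.cross 1 s θ) / s)
              + (2 / s) * (G.en s θ * (G.r s θ)⁻¹ + 1 / 4 * (G.N s θ * (G.r s θ)⁻¹)) := by
          field_simp
          ring
        linarith
      have h6 : s ^ 2 * (-(2 / s) * F s) = - (2 * s * F s) := by field_simp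
      have h7 := mul_le_mul_of_nonneg_left key (sq_nonneg s)
      simp only [Nat.cast_ofNat, Nat.add_one_sub_one, pow_one] at *
      linarith
  rw [le_div_iff₀ (by positivity)]
  have hFt : 0 ≤ F t := by
    refine intervalIntegral.integral_nonneg hpi fun θ _ => ?_
    have hb' : t ∈ Ioo Tm Tp := mem_Ioo_of hb ht
    have := N_pos (G := G) hQ hb' θ
    have := r_pos (G := G) hb' θ
    have := en_nonneg (G := G) t θ
    positivity
  have : Tm ^ 2 ≤ t ^ 2 := by have := ht.1; gcongr
  calc F t * Tm ^ 2 ≤ F t * t ^ 2 := by gcongr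
    _ = t ^ 2 * F t := mul_comm _ _
    _ ≤ _ := hmono

end
end GowdySolution

namespace GowdySolution
variable {Q lam Tm Tp : ℝ} {G : GowdySolution Q lam Tm Tp}

/-! ### The timelike convergence condition and the bound for `α` -/

theorem tcc_N (hT : TCC Q lam Tm Tp G.η G.α G.U G.φ G.σ) {t : ℝ} (ht : t ∈ Ioo Tm Tp) (θ : ℝ) :
    G.N t θ / 2 ≤ (pt G.φ t θ) ^ 2 + exp (2 * lam * G.φ t θ) * (pt G.σ t θ) ^ 2 := by
  have h := hT t ht θ
  have e : 2 * lam * G.φ t θ + 2 * (G.η t θ - G.U t θ) = 2 * (G.η t θ + lam * G.φ t θ - G.U t θ) := by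
    ring
  rw [N, e]
  linarith

theorem en_ge {t : ℝ} (ht : t ∈ Ioo Tm Tp) (θ : ℝ) :
    pt G.U t θ ^ 2 + 1 / 4 * (pt G.φ t θ ^ 2 + exp (2 * lam * G.φ t θ) * (pt G.σ t θ) ^ 2)
      ≤ G.en t θ := by
  rw [en_eq ht θ]
  have hα := α_pos (G := G) ht θ
  have h1 : 0 ≤ G.α t θ * (pth G.U t θ) ^ 2 := by positivity
  have h2 : 0 ≤ exp (4 * G.U t θ) / (4 * t ^ 2) *
    ((pt G.A t θ) ^ 2 + G.α t θ * (pth G.A t θ) ^ 2) := by positivity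
  have h3 : 0 ≤ G.α t θ * (pth G.φ t θ) ^ 2 := by positivity
  have h4 : 0 ≤ exp (2 * lam * G.φ t θ) * (G.α t θ * (pth G.σ t θ) ^ 2) := by positivity
  linarith

/-- After completing squares, the timelike convergence condition shows that the source of the energy
is at most `-(1/4 - λ²) t N` times the energy density, which is dissipative when `|λ| < 1/2`. -/
theorem dissipation (hTm : 0 < Tm) (hQ : Q ≠ 0) (hT : TCC Q lam Tm Tp G.η G.α G.U G.φ G.σ)
    {t : ℝ} (ht : t ∈ Ioo Tm Tp) (θ : ℝ) :
    - (t * G.N t θ / 2) * G.en t θ - (G.en t θ + G.cross 1 t θ) / t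
          + G.N t θ / 2 * (pt G.U t θ - lam * pt G.φ t θ)
      ≤ - ((1 / 4 - lam ^ 2) * (t * G.N t θ)) * G.en t θ := by
  have ht0 : 0 < t := hTm.trans ht.1
  have hN := N_pos (G := G) hQ ht θ
  have h1 := tcc_N hT ht θ
  have h2 := en_ge (G := G) ht θ
  have h3 : G.N t θ / 4 ≤ G.en t θ + G.cross 1 t θ := by
    rw [en_eq ht θ, cross_eq ht θ]
    have hα := α_pos (G := G) ht θ
    have h1' : 0 ≤ (pt G.U t θ) ^ 2 := by positivity
    have h2' : 0 ≤ exp (4 * G.U t θ) / (4 * t ^ 2) * (G.α t θ * (pth G.A t θ) ^ 2) := by positivity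
    linarith
  have h5 : 0 ≤ exp (2 * lam * G.φ t θ) * (pt G.σ t θ) ^ 2 := by positivity
  obtain ⟨k, hk⟩ : ∃ k, k = 1 / 4 + lam ^ 2 := ⟨_, rfl⟩
  have hk0 : 0 < k := by rw [hk]; positivity
  obtain ⟨x, hx⟩ : ∃ x, x = t * pt G.U t θ := ⟨_, rfl⟩
  obtain ⟨y, hy⟩ : ∃ y, y = t * pt G.φ t θ := ⟨_, rfl⟩
  have h6 : 0 ≤ k * x ^ 2 + k * y ^ 2 / 4 + 1 / 4 - (x - lam * y) / 2 := by
    have : 0 ≤ 4 * k * (k * x ^ 2 + k * y ^ 2 / 4 + 1 / 4 - (x - lam * y) / 2) := by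
      have e : 4 * k * (k * x ^ 2 + k * y ^ 2 / 4 + 1 / 4 - (x - lam * y) / 2)
          = (2 * k * x - 1 / 2) ^ 2 + (k * y + lam) ^ 2 := by
        linear_combination hk
      rw [e]; positivity
    exact nonneg_of_mul_nonneg_right this (by positivity)
  have h7 : x ^ 2 + y ^ 2 / 4 ≤ t ^ 2 * G.en t θ := by
    have : t ^ 2 * (pt G.U t θ ^ 2 + 1 / 4 * pt G.φ t θ ^ 2) ≤ t ^ 2 * G.en t θ :=
      mul_le_mul_of_nonneg_left (by linarith) (sq_nonneg t)
    rw [hx, hy]; linarith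
  have h8 : 0 ≤ (G.N t θ * (k * (t ^ 2 * G.en t θ) - (x - lam * y) / 2)
      + (G.en t θ + G.cross 1 t θ)) / t := by
    refine div_nonneg ?_ ht0.le
    have h9 : G.N t θ * (-(1/4)) ≤ G.N t θ * (k * (t ^ 2 * G.en t θ) - (x - lam * y) / 2) := by
      refine mul_le_mul_of_nonneg_left ?_ hN.le
      have := mul_le_mul_of_nonneg_left h7 hk0.le
      linarith
    linarith
  have h9 : (G.N t θ * (k * (t ^ 2 * G.en t θ) - (x - lam * y) / 2)
      + (G.en t θ + G.cross 1 t θ)) / t = (1 / 4 + lam ^ 2) * (t * G.N t θ) * G.en t θ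
        + (G.en t θ + G.cross 1 t θ) / t - G.N t θ / 2 * (pt G.U t θ - lam * pt G.φ t θ) := by
    rw [hx, hy, hk]
    field_simp
    ring
  linarith

theorem smLogN (hQ : Q ≠ 0) : Sm Tm Tp (fun t θ => log (G.N t θ)) :=
  G.smN.log fun _ ht θ => (N_pos hQ ht θ).ne'

theorem pth_logN (hTm : 0 < Tm) (hQ : Q ≠ 0) {t : ℝ} (ht : t ∈ Ioo Tm Tp) (θ : ℝ) :
    pth (fun t θ => log (G.N t θ)) t θ = G.L t θ := by
  have hN := N_pos (G := G) hQ ht θ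
  have h := ((G.smN.hasTh ht θ).log hN.ne').deriv
  change pth (fun t θ => log (G.N t θ)) t θ = _ at h
  rw [h, pth_N hTm ht θ]
  field_simp

theorem abs_le_one_add_sq (x : ℝ) : |x| ≤ 1 + x ^ 2 := by
  rw [abs_le]; constructor <;> nlinarith [sq_nonneg (x - 1), sq_nonneg (x + 1)]

theorem L_le (hTm : 0 < Tm) (hlam : |lam| ≤ 1 / 2) {t : ℝ} (ht : t ∈ Ioo Tm Tp) (θ : ℝ) :
    |G.L t θ| ≤ (6 + 2 * t) * ((1 + G.en t θ) * (G.r t θ)⁻¹) := by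
  have ht0 : 0 < t := hTm.trans ht.1
  have hr := r_pos (G := G) ht θ
  have hα := α_pos (G := G) ht θ
  have hr2 := r_sq (G := G) ht θ
  have hen : (G.r t θ * pth G.U t θ) ^ 2 + (G.r t θ * pth G.φ t θ / 2) ^ 2 ≤ G.en t θ := by
    rw [en_eq ht θ, mul_pow, div_pow, mul_pow, hr2]
    have h1 : 0 ≤ (pt G.U t θ) ^ 2 := by positivity
    have h2 : 0 ≤ exp (4 * G.U t θ) / (4 * t ^ 2) *
      ((pt G.A t θ) ^ 2 + G.α t θ * (pth G.A t θ) ^ 2) := by positivity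
    have h3 : 0 ≤ (pt G.φ t θ) ^ 2 := by positivity
    have h4 : 0 ≤ exp (2 * lam * G.φ t θ) *
      ((pt G.σ t θ) ^ 2 + G.α t θ * (pth G.σ t θ) ^ 2) := by positivity
    linarith
  have hU := abs_le_one_add_sq (G.r t θ * pth G.U t θ)
  have hφ := abs_le_one_add_sq (G.r t θ * pth G.φ t θ / 2)
  have hU' : |G.r t θ * pth G.U t θ| ≤ 1 + G.en t θ := by
    linarith [sq_nonneg (G.r t θ * pth G.φ t θ / 2)]
  have hφ' : |G.r t θ * pth G.φ t θ| ≤ 2 * (1 + G.en t θ) := by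
    rw [abs_div, abs_two] at hφ
    linarith [sq_nonneg (G.r t θ * pth G.U t θ)]
  have hd : |G.dens 1 t θ - G.dens (-1) t θ| ≤ 2 * G.en t θ := by
    have h1 := G.dens_nonneg 1 t θ
    have h2 := G.dens_nonneg (-1) t θ
    rw [abs_le, en]; constructor <;> linarith
  have hmul : |2 * lam * (G.r t θ * pth G.φ t θ)| ≤ 1 * (2 * (1 + G.en t θ)) := by
    rw [abs_mul, abs_mul, abs_two]
    exact mul_le_mul (by linarith) hφ' (abs_nonneg _) zero_le_one
  have e : G.L t θ = (2 * lam * (G.r t θ * pth G.φ t θ) - 2 * (G.r t θ * pth G.U t θ)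
      + t * (G.dens 1 t θ - G.dens (-1) t θ)) * (G.r t θ)⁻¹ := by
    rw [L]; field_simp
  rw [e, abs_mul, abs_of_pos (inv_pos.2 hr), ← mul_assoc (6 + 2 * t)]
  refine mul_le_mul_of_nonneg_right ?_ (inv_pos.2 hr).le
  have h0 := en_nonneg (G := G) t θ
  calc _ ≤ |2 * lam * (G.r t θ * pth G.φ t θ)| + |2 * (G.r t θ * pth G.U t θ)|
        + |t * (G.dens 1 t θ - G.dens (-1) t θ)| :=
        (abs_add_le _ _).trans (add_le_add_left (abs_sub _ _) _)
    _ ≤ 1 * (2 * (1 + G.en t θ)) + 2 * (1 + G.en t θ) + t * (2 * G.en t θ) := by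
        rw [abs_mul 2, abs_mul t, abs_two, abs_of_pos ht0]
        gcongr
    _ ≤ _ := by nlinarith [mul_nonneg ht0.le h0]

section
variable {b : ℝ}

/-- Harnack type inequality: the values of `N` at equal times are comparable. -/
theorem harnack (hTm : 0 < Tm) (hQ : Q ≠ 0) (hlam : |lam| ≤ 1 / 2) (hTb : Tm < b) (hb : b < Tp) :
    ∃ c, 0 < c ∧ ∀ t ∈ Ioc Tm b, ∀ x y, G.N t x ≤ c * G.N t y := by
  obtain ⟨C1, h1⟩ := rinv_bound (G := G) hTm hQ hTb hb
  obtain ⟨C2, h2⟩ := energy_bound (G := G) hTm hQ hTb hb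
  refine ⟨exp ((6 + 2 * b) * (2 * π * C1 + C2)), exp_pos _, fun t ht x y => ?_⟩
  have ht' := mem_Ioo_of hb ht
  have ht0 : 0 < t := hTm.trans ht.1
  have hpi : (0 : ℝ) ≤ 2 * π := by positivity
  have hc1 := (smRinv (G := G)).continuous_slice ht'
  have hc2 := ((smEn (G := G) hTm).mul (smRinv (G := G))).continuous_slice ht'
  have hosc := (smLogN (G := G) hQ).osc_le ht'
    (h := fun θ => (6 + 2 * t) * ((G.r t θ)⁻¹ + G.en t θ * (G.r t θ)⁻¹))
    (continuous_const.mul (hc1.add hc2)) (fun θ => by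
      rw [pth_logN hTm hQ ht' θ]
      refine (L_le hTm hlam ht' θ).trans (le_of_eq (by ring))) x y
  have hi1 := hc1.intervalIntegrable (μ := volume) 0 (2 * π)
  have hi2 := hc2.intervalIntegrable (μ := volume) 0 (2 * π)
  rw [intervalIntegral.integral_const_mul, intervalIntegral.integral_add hi1 hi2] at hosc
  have h3 : ∫ θ in (0 : ℝ)..(2 * π), (G.r t θ)⁻¹ ≤ 2 * π * C1 := by
    have := intervalIntegral.integral_mono_on hpi hi1 (intervalIntegrable_const (c := C1))
      fun θ _ => h1 t ht θ
    simpa using this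
  have h3' : 0 ≤ ∫ θ in (0 : ℝ)..(2 * π), (G.r t θ)⁻¹ :=
    intervalIntegral.integral_nonneg hpi fun θ _ => inv_nonneg.2 (r_pos ht' θ).le
  have h4' : 0 ≤ ∫ θ in (0 : ℝ)..(2 * π), G.en t θ * (G.r t θ)⁻¹ :=
    intervalIntegral.integral_nonneg hpi fun θ _ =>
      mul_nonneg (en_nonneg t θ) (inv_nonneg.2 (r_pos ht' θ).le)
  have h4 := h2 t ht
  have h5 : log (G.N t x) ≤ (6 + 2 * b) * (2 * π * C1 + C2) + log (G.N t y) := by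
    have : (6 + 2 * t) * ((∫ θ in (0 : ℝ)..(2 * π), (G.r t θ)⁻¹) +
        ∫ θ in (0 : ℝ)..(2 * π), G.en t θ * (G.r t θ)⁻¹) ≤ (6 + 2 * b) * (2 * π * C1 + C2) := by
      have := ht.2
      have : 0 ≤ 6 + 2 * b := by linarith
      gcongr
    linarith
  rw [← exp_log (N_pos (G := G) hQ ht' x), ← exp_log (N_pos (G := G) hQ ht' y), ← exp_add]
  exact exp_le_exp.2 h5

theorem smLogα : Sm Tm Tp (fun t θ => log (G.α t θ)) :=
  G.smα.log fun _ ht θ => (α_pos ht θ).ne'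

theorem pt_logα {t : ℝ} (ht : t ∈ Ioo Tm Tp) (θ : ℝ) :
    pt (fun t θ => log (G.α t θ)) t θ = - (t * G.N t θ) := by
  have hα := α_pos (G := G) ht θ
  have h := ((G.smα.hasT ht θ).log hα.ne').deriv
  change pt (fun t θ => log (G.α t θ)) t θ = _ at h
  rw [h, pt_α ht θ]
  field_simp

/-- `log α` stays bounded at `θ = 0`: the energy grows towards the past at least as fast as a
power of `α`, and it is bounded. -/
theorem logα_zero_bound (hTm : 0 < Tm) (hQ : Q ≠ 0) (hlam : |lam| < 1 / 2) (hTb : Tm < b)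
    (hb : b < Tp) (hT : TCC Q lam Tm Tp G.η G.α G.U G.φ G.σ) :
    ∃ W, ∀ t ∈ Ioc Tm b, |log (G.α t 0)| ≤ W := by
  obtain ⟨c, hc, hH⟩ := harnack (G := G) hTm hQ hlam.le hTb hb
  obtain ⟨C, hC⟩ := energy_bound (G := G) hTm hQ hTb hb
  have hbm : b ∈ Ioc Tm b := ⟨hTb, le_rfl⟩
  have hbo : b ∈ Ioo Tm Tp := ⟨hTb, hb⟩
  have hpi : (0 : ℝ) ≤ 2 * π := by positivity
  have h1 : Sm Tm Tp (fun t θ => G.en t θ * (G.r t θ)⁻¹) := (smEn hTm).mul smRinv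
  have h3 : Sm Tm Tp (fun t θ => (G.dens 1 t θ - G.dens (-1) t θ) * 2⁻¹) :=
    ((G.smDens hTm 1).sub (G.smDens hTm (-1))).mul (Sm.const 2⁻¹)
  set F : ℝ → ℝ := fun t => ∫ θ in (0 : ℝ)..(2 * π), G.en t θ * (G.r t θ)⁻¹ with hF
  set a : ℝ → ℝ := fun t => log (G.α t 0) with ha
  set κ : ℝ := (1 / 4 - lam ^ 2) / c with hκ
  have hδ : 0 < 1 / 4 - lam ^ 2 := by
    have := abs_lt.1 hlam
    nlinarith
  have hκ0 : 0 < κ := by positivity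
  have hFb : 0 < F b := by
    refine intervalIntegral.intervalIntegral_pos_of_pos
      ((h1.continuous_slice hbo).intervalIntegrable _ _) (fun θ => ?_) (by positivity)
    have := N_pos (G := G) hQ hbo θ
    have := tcc_N hT hbo θ
    have := en_ge (G := G) hbo θ
    have : 0 < G.en b θ := by nlinarith [sq_nonneg (pt G.U b θ)]
    exact mul_pos this (inv_pos.2 (r_pos hbo θ))
  -- the derivative of the energy
  have hF' : ∀ s ∈ Ioc Tm b, ∫ θ in (0 : ℝ)..(2 * π), pt (fun t θ => G.en t θ * (G.r t θ)⁻¹) s θ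
      ≤ -(κ * (s * G.N s 0)) * F s := by
    intro s hs
    have hs' := mem_Ioo_of hb hs
    have hs0 : 0 < s := hTm.trans hs.1
    have hz := h3.integral_pth hs'
    have hi1 := (h3.pth.continuous_slice hs').intervalIntegrable (μ := volume) 0 (2 * π)
    have hi2 := (h1.continuous_slice hs').intervalIntegrable (μ := volume) 0 (2 * π)
    have e1 : -(κ * (s * G.N s 0)) * F s = ∫ θ in (0 : ℝ)..(2 * π),
        (pth (fun t θ => (G.dens 1 t θ - G.dens (-1) t θ) * 2⁻¹) s θ + -(κ * (s * G.N s 0)) *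
        (G.en s θ * (G.r s θ)⁻¹)) := by
      rw [intervalIntegral.integral_add hi1 (hi2.const_mul _), hz, zero_add,
        intervalIntegral.integral_const_mul]
    rw [e1]
    refine intervalIntegral.integral_mono_on hpi
      ((h1.pt.continuous_slice hs').intervalIntegrable _ _) (hi1.add (hi2.const_mul _)) fun θ _ => ?_
    rw [pt_en hTm hs' θ]
    have hr := inv_pos.2 (r_pos (G := G) hs' θ)
    have hd := mul_le_mul_of_nonneg_left (dissipation hTm hQ hT hs' θ) hr.le
    have hN : κ * (s * G.N s 0) ≤ (1 / 4 - lam ^ 2) * (s * G.N s θ) := by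
      have := hH s hs 0 θ
      rw [hκ, div_mul_eq_mul_div, div_le_iff₀ hc]
      calc (1 / 4 - lam ^ 2) * (s * G.N s 0) ≤ (1 / 4 - lam ^ 2) * (s * (c * G.N s θ)) := by gcongr
        _ = _ := by ring
    have h5 := mul_le_mul_of_nonneg_right hN (mul_nonneg (en_nonneg (G := G) s θ) hr.le)
    linarith
  have hada : ∀ s ∈ Ioc Tm b, HasDerivAt a (-(s * G.N s 0)) s := fun s hs => by
    have := (smLogα (G := G)).hasT (mem_Ioo_of hb hs) 0
    rwa [pt_logα (mem_Ioo_of hb hs)] at this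
  refine ⟨|a b| + |κ⁻¹ * (log C - log (F b)) + a b|, fun t ht => ?_⟩
  have hIcc : ∀ s ∈ Icc t b, s ∈ Ioc Tm b := fun s hs => ⟨ht.1.trans_le hs.1, hs.2⟩
  have hlow : a b ≤ a t := by
    have := mono_past (f := fun s => - a s) ht.2 (fun s hs => (hada s (hIcc s hs)).neg)
      (fun s hs => by
        have := N_pos (G := G) hQ (mem_Ioo_of hb (hIcc s hs)) 0
        have : 0 < s := hTm.trans (hIcc s hs).1
        rw [neg_neg]; positivity)
    simpa using this
  have hup : F b * exp (- (κ * a b)) ≤ F t * exp (- (κ * a t)) := by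
    have := mono_past (f := fun s => - (F s * exp (- (κ * a s)))) ht.2 (fun s hs =>
      ((h1.hasDerivAt_integral (mem_Ioo_of hb (hIcc s hs))).mul
        (((hada s (hIcc s hs)).const_mul κ).neg.exp)).neg) (fun s hs => by
          have h6 := hF' s (hIcc s hs)
          have h7 := mul_le_mul_of_nonneg_right h6 (exp_pos (-(κ * a s))).le
          simp only [hF] at h7 ⊢
          simp only [Pi.neg_apply]
          linarith)
    simpa using this
  have hCt : F t ≤ C := hC t ht
  have hFt : 0 < F t := by
    have h8 : 0 < F t * exp (- (κ * a t)) := lt_of_lt_of_le (by positivity) hup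
    exact pos_of_mul_pos_left h8 (exp_pos _).le
  have hlog : log (F b) - κ * a b ≤ log C - κ * a t := by
    have h9 := log_le_log (by positivity) (hup.trans (mul_le_mul_of_nonneg_right hCt (exp_pos _).le))
    rw [log_mul hFb.ne' (exp_pos _).ne', log_mul (hFt.trans_le hCt).ne' (exp_pos _).ne', log_exp,
      log_exp] at h9
    linarith
  have hfin : a t ≤ κ⁻¹ * (log C - log (F b)) + a b := by
    have : κ⁻¹ * (κ * (a t - a b)) ≤ κ⁻¹ * (log C - log (F b)) :=
      mul_le_mul_of_nonneg_left (by linarith) (inv_pos.2 hκ0).le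
    rw [inv_mul_cancel_left₀ hκ0.ne'] at this
    linarith
  rw [abs_le]
  constructor
  · linarith [neg_abs_le (a b), abs_nonneg (κ⁻¹ * (log C - log (F b)) + a b)]
  · linarith [abs_nonneg (a b), le_abs_self (κ⁻¹ * (log C - log (F b)) + a b)]

end
end GowdySolution

/-! ### Bounds relative to a weight -/

/-- `f` is bounded by a constant multiple of the weight `S` on `(Tm, b] × ℝ`. -/
def Ob (Tm b : ℝ) (S f : ℝ → ℝ → ℝ) : Prop := ∃ C, ∀ t ∈ Ioc Tm b, ∀ θ, |f t θ| ≤ C * S t θ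

/-- Plain boundedness on `(Tm, b] × ℝ`. -/
abbrev Bd (Tm b : ℝ) (f : ℝ → ℝ → ℝ) : Prop := Ob Tm b (fun _ _ => 1) f

theorem pth_congr {f g : ℝ → ℝ → ℝ} {t : ℝ} (h : ∀ θ, f t θ = g t θ) (θ : ℝ) :
    pth f t θ = pth g t θ := by
  unfold pth; congr 1; funext x; exact h x

theorem pt_congr {f g : ℝ → ℝ → ℝ} {Tm Tp t : ℝ} (ht : t ∈ Ioo Tm Tp)
    (h : ∀ s ∈ Ioo Tm Tp, ∀ θ, f s θ = g s θ) (θ : ℝ) : pt f t θ = pt g t θ := by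
  unfold pt
  refine EventuallyEq.deriv_eq ?_
  filter_upwards [isOpen_Ioo.mem_nhds ht] with s hs using h s hs θ

namespace Ob
variable {Tm b : ℝ} {S f g : ℝ → ℝ → ℝ}

theorem le (h : ∀ t ∈ Ioc Tm b, ∀ θ, |f t θ| ≤ |g t θ|) (hg : Ob Tm b S g) : Ob Tm b S f := by
  obtain ⟨C, hC⟩ := hg
  exact ⟨C, fun t ht θ => (h t ht θ).trans (hC t ht θ)⟩

theorem congr (h : ∀ t ∈ Ioc Tm b, ∀ θ, f t θ = g t θ) (hg : Ob Tm b S g) : Ob Tm b S f :=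
  hg.le fun t ht θ => by rw [h t ht θ]

theorem bd (h : Bd Tm b f) : ∃ C, 0 ≤ C ∧ ∀ t ∈ Ioc Tm b, ∀ θ, |f t θ| ≤ C := by
  obtain ⟨C, hC⟩ := h
  exact ⟨|C|, abs_nonneg C, fun t ht θ => (hC t ht θ).trans (by rw [mul_one]; exact le_abs_self C)⟩

theorem weight (h : Bd Tm b f) (hS : ∀ t θ, 1 ≤ S t θ) : Ob Tm b S f := by
  obtain ⟨C, h0, hC⟩ := h.bd
  exact ⟨C, fun t ht θ => (hC t ht θ).trans (le_mul_of_one_le_right h0 (hS t θ))⟩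

theorem of_weight (h : Ob Tm b S f) (hS : Bd Tm b S) : Bd Tm b f := by
  obtain ⟨C, hC⟩ := h
  obtain ⟨C', h0, hC'⟩ := hS.bd
  refine ⟨|C| * C', fun t ht θ => ?_⟩
  have h1 : C * S t θ ≤ |C * S t θ| := le_abs_self _
  rw [abs_mul] at h1
  have h2 := mul_le_mul_of_nonneg_left (hC' t ht θ) (abs_nonneg C)
  linarith [hC t ht θ]

theorem add (hf : Ob Tm b S f) (hg : Ob Tm b S g) : Ob Tm b S (fun t θ => f t θ + g t θ) := by
  obtain ⟨C, hC⟩ := hf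
  obtain ⟨C', hC'⟩ := hg
  refine ⟨C + C', fun t ht θ => (abs_add_le _ _).trans ?_⟩
  rw [add_mul]
  exact add_le_add (hC t ht θ) (hC' t ht θ)

theorem mul (hf : Bd Tm b f) (hg : Ob Tm b S g) : Ob Tm b S (fun t θ => f t θ * g t θ) := by
  obtain ⟨C, h0, hC⟩ := hf.bd
  obtain ⟨C', hC'⟩ := hg
  refine ⟨C * C', fun t ht θ => ?_⟩
  rw [abs_mul, mul_assoc]
  exact mul_le_mul (hC t ht θ) (hC' t ht θ) (abs_nonneg _) h0

theorem mul_right (hf : Ob Tm b S f) (hg : Bd Tm b g) : Ob Tm b S (fun t θ => f t θ * g t θ) :=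
  (hg.mul hf).congr fun _ _ _ => mul_comm _ _

theorem const (c : ℝ) : Bd Tm b (fun _ _ => c) := ⟨|c|, fun _ _ _ => by rw [mul_one]⟩

theorem smul (c : ℝ) (hf : Ob Tm b S f) : Ob Tm b S (fun t θ => c * f t θ) := (const c).mul hf

theorem sub (hf : Ob Tm b S f) (hg : Ob Tm b S g) : Ob Tm b S (fun t θ => f t θ - g t θ) :=
  (hf.add (hg.smul (-1))).congr fun _ _ _ => by ring

theorem time (hTm : 0 < Tm) : Bd Tm b (fun t _ => t) :=
  ⟨b, fun t ht _ => by rw [abs_of_pos (hTm.trans ht.1), mul_one]; exact ht.2⟩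

theorem timeInv (hTm : 0 < Tm) : Bd Tm b (fun t _ => t⁻¹) :=
  ⟨Tm⁻¹, fun t ht _ => by
    rw [abs_of_pos (inv_pos.2 (hTm.trans ht.1)), mul_one]
    exact inv_anti₀ hTm ht.1.le⟩

theorem exp (hf : Bd Tm b f) : Bd Tm b (fun t θ => Real.exp (f t θ)) := by
  obtain ⟨C, -, hC⟩ := hf.bd
  refine ⟨Real.exp C, fun t ht θ => ?_⟩
  rw [abs_of_pos (exp_pos _), mul_one]
  exact exp_le_exp.2 ((le_abs_self _).trans (hC t ht θ))

theorem of_sq (hf : Bd Tm b (fun t θ => f t θ ^ 2)) : Bd Tm b f :=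
  ((const 1).add hf).le fun _ _ _ => (GowdySolution.abs_le_one_add_sq _).trans (le_abs_self _)

/-- A function with bounded time derivative is bounded, since the time interval is finite. -/
theorem of_pt {Tp : ℝ} (hsm : Sm Tm Tp f) (hTb : Tm < b) (hb : b < Tp)
    (hf : Bd Tm b (pt f)) : Bd Tm b f := by
  obtain ⟨C, h0, hC⟩ := hf.bd
  obtain ⟨C', hC'⟩ := hsm.bdd_compact hTb hb
  refine ⟨C' + C * (b - Tm), fun t ht θ => ?_⟩
  have hd : ∀ s ∈ Icc t b, HasDerivAt (fun s => f s θ) (pt f s θ) s := fun s hs =>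
    hsm.hasT ⟨ht.1.trans_le hs.1, hs.2.trans_lt hb⟩ θ
  have hlin : ∀ s ∈ Icc t b, HasDerivAt (fun s : ℝ => C * s) C s := fun s _ => by
    simpa using (hasDerivAt_id s).const_mul C
  have hm : ∀ s ∈ Icc t b, s ∈ Ioc Tm b := fun s hs => ⟨ht.1.trans_le hs.1, hs.2⟩
  have h1 := GowdySolution.mono_past ht.2 (fun s hs => (hlin s hs).add (hd s hs))
    fun s hs => by linarith [neg_abs_le (pt f s θ), hC s (hm s hs) θ]
  have h2 := GowdySolution.mono_past ht.2 (fun s hs => (hlin s hs).sub (hd s hs))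
    fun s hs => by linarith [le_abs_self (pt f s θ), hC s (hm s hs) θ]
  have h3 := abs_le.1 (hC' b ⟨le_rfl, le_rfl⟩ θ)
  simp only [Pi.add_apply, Pi.sub_apply] at h1 h2
  have h4 : C * (b - t) ≤ C * (b - Tm) := mul_le_mul_of_nonneg_left (by linarith [ht.1]) h0
  rw [mul_one, abs_le]
  constructor <;> linarith

end Ob

namespace GowdySolution
variable {Q lam Tm Tp b : ℝ} {G : GowdySolution Q lam Tm Tp}

/-! ### First derivatives -/

theorem cross_le (e t θ : ℝ) : G.cross e t θ ≤ (G.dens e t θ + G.dens (-e) t θ) / 2 := by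
  have h : 0 ≤ (G.D e G.U t θ - G.D (-e) G.U t θ) ^ 2
      + exp (4 * G.U t θ) / (4 * t ^ 2) * (G.D e G.A t θ + G.D (-e) G.A t θ) ^ 2
      + (1 / 4) * ((G.D e G.φ t θ - G.D (-e) G.φ t θ) ^ 2
        + exp (2 * lam * G.φ t θ) * (G.D e G.σ t θ - G.D (-e) G.σ t θ) ^ 2) := by positivity
  unfold cross dens
  linarith

theorem D_le_dens (e t θ : ℝ) :
    |G.D e G.U t θ| ≤ 1 + G.dens e t θ ∧ |G.D e G.φ t θ| ≤ 2 * (1 + G.dens e t θ) := by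
  have h1 := abs_le_one_add_sq (G.D e G.U t θ)
  have h2 := abs_le_one_add_sq (G.D e G.φ t θ / 2)
  have h3 : 0 ≤ exp (4 * G.U t θ) / (4 * t ^ 2) * (G.D e G.A t θ) ^ 2 := by positivity
  have h4 : 0 ≤ exp (2 * lam * G.φ t θ) * (G.D e G.σ t θ) ^ 2 := by positivity
  rw [abs_div, abs_two] at h2
  unfold dens
  constructor
  · linarith [sq_nonneg (G.D e G.φ t θ)]
  · linarith [sq_nonneg (G.D e G.U t θ)]

/-- The energy densities are bounded: along the two null directions they grow towards the past at
most at a rate controlled by `-∂_t log α`, which is integrable. -/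
theorem dens_bound (hTm : 0 < Tm) (hQ : Q ≠ 0) (hlam : |lam| < 1 / 2) (hTb : Tm < b)
    (hb : b < Tp) (hT : TCC Q lam Tm Tp G.η G.α G.U G.φ G.σ) :
    ∃ C, ∀ t ∈ Ioc Tm b, ∀ e, IsSign e → ∀ θ, G.dens e t θ ≤ C := by
  obtain ⟨c, hc, hH⟩ := harnack (G := G) hTm hQ hlam.le hTb hb
  obtain ⟨W, hW⟩ := logα_zero_bound hTm hQ hlam hTb hb hT
  refine light_cone_bound (g := G.dens) (r := G.r) (fun e _ => G.smDens hTm e) hTm hTb hb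
    (w := fun t => log (G.α t 0)) (w' := fun t => -(t * G.N t 0)) (κ := (1 + Tm⁻¹) * c)
    (c := 2 * Tm⁻¹) (W := W) (by positivity) (by positivity) (fun s hs => ?_) (fun s hs => ?_) hW
    (fun t ht e he θ => ?_)
  · have := (smLogα (G := G)).hasT (mem_Ioo_of hb hs) 0
    rwa [pt_logα (mem_Ioo_of hb hs)] at this
  · have := N_pos (G := G) hQ (mem_Ioo_of hb hs) 0
    have : 0 < s := hTm.trans hs.1
    have : 0 < s * G.N s 0 := by positivity
    linarith
  · have ht' := mem_Ioo_of hb ht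
    have ht0 : 0 < t := hTm.trans ht.1
    change _ ≤ G.D (-e) (G.dens e) t θ
    rw [transport hTm ht' θ he]
    have hN := N_pos (G := G) hQ ht' θ
    have hd1 := G.dens_nonneg e t θ
    have hd2 := G.dens_nonneg (-e) t θ
    obtain ⟨hU, hφ⟩ := D_le_dens (G := G) e t θ
    set P := 1 + G.dens e t θ + G.dens (-e) t θ with hP
    have hP0 : 0 ≤ P := by positivity
    have k1 : (G.dens e t θ + G.cross e t θ) / t ≤ 2 * Tm⁻¹ * P := by
      have hcr := cross_le (G := G) e t θ
      have h1 : G.dens e t θ + G.cross e t θ ≤ 2 * P := by linarith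
      calc (G.dens e t θ + G.cross e t θ) / t ≤ 2 * P / t := by gcongr
        _ ≤ 2 * P / Tm := by have := ht.1.le; gcongr
        _ = _ := by ring
    have k2 : -(G.N t θ * P) ≤ G.N t θ / 2 * (G.D e G.U t θ - lam * G.D e G.φ t θ) := by
      have h1 : |lam * G.D e G.φ t θ| ≤ 1 / 2 * (2 * (1 + G.dens e t θ)) := by
        rw [abs_mul]; exact mul_le_mul hlam.le hφ (abs_nonneg _) (by norm_num)
      have h2 : -(2 * P) ≤ G.D e G.U t θ - lam * G.D e G.φ t θ := by
        linarith [neg_abs_le (G.D e G.U t θ), le_abs_self (lam * G.D e G.φ t θ)]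
      have := mul_le_mul_of_nonneg_left h2 (half_pos hN).le
      linarith
    have k3 : t * G.N t θ * G.dens e t θ ≤ t * G.N t θ * P :=
      mul_le_mul_of_nonneg_left (by linarith) (by positivity)
    have k4 : t * G.N t θ + G.N t θ ≤ (1 + Tm⁻¹) * c * (t * G.N t 0) := by
      have h1 : G.N t θ ≤ Tm⁻¹ * (t * G.N t θ) := by
        rw [← mul_assoc]
        refine le_mul_of_one_le_left hN.le ?_
        rw [inv_mul_eq_div, one_le_div hTm]; exact ht.1.le
      have h2 : t * G.N t θ ≤ t * (c * G.N t 0) := mul_le_mul_of_nonneg_left (hH t ht θ 0) ht0.le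
      have h3 : (1 + Tm⁻¹) * (t * G.N t θ) ≤ (1 + Tm⁻¹) * (t * (c * G.N t 0)) :=
        mul_le_mul_of_nonneg_left h2 (by positivity)
      linarith
    have k5 := mul_le_mul_of_nonneg_right k4 hP0
    linarith

variable (b G) in
/-- Boundedness on `(Tm, b]` of all quantities of first order. -/
structure FirstBd : Prop where
  DU : ∀ e, IsSign e → Bd Tm b (G.D e G.U)
  DA : ∀ e, IsSign e → Bd Tm b (G.D e G.A)
  Dφ : ∀ e, IsSign e → Bd Tm b (G.D e G.φ)
  Dσ : ∀ e, IsSign e → Bd Tm b (G.D e G.σ)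
  dens : ∀ e, IsSign e → Bd Tm b (G.dens e)
  U : Bd Tm b G.U
  φ : Bd Tm b G.φ
  logα : Bd Tm b (fun t θ => log (G.α t θ))
  α : Bd Tm b G.α
  r : Bd Tm b G.r
  rinv : Bd Tm b (fun t θ => (G.r t θ)⁻¹)
  N : Bd Tm b G.N

theorem pth_eq {X : ℝ → ℝ → ℝ} {t : ℝ} (ht : t ∈ Ioo Tm Tp) (θ : ℝ) :
    pth X t θ = 1 / 2 * (G.D 1 X t θ - G.D (-1) X t θ) * (G.r t θ)⁻¹ := by
  have := r_pos (G := G) ht θ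
  simp only [D]; field_simp; ring

theorem logα_bound (hTm : 0 < Tm) (hQ : Q ≠ 0) (hlam : |lam| < 1 / 2) (hTb : Tm < b)
    (hb : b < Tp) (hT : TCC Q lam Tm Tp G.η G.α G.U G.φ G.σ) :
    Bd Tm b (fun t θ => log (G.α t θ)) := by
  obtain ⟨c, hc, hH⟩ := harnack (G := G) hTm hQ hlam.le hTb hb
  obtain ⟨W, hW⟩ := logα_zero_bound hTm hQ hlam hTb hb hT
  obtain ⟨C, hC⟩ := (smLogα (G := G)).bdd_compact hTb hb
  have hada : ∀ s ∈ Ioc Tm b, ∀ θ, HasDerivAt (fun t => log (G.α t θ)) (-(s * G.N s θ)) s :=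
    fun s hs θ => by
      have := (smLogα (G := G)).hasT (mem_Ioo_of hb hs) θ
      rwa [pt_logα (mem_Ioo_of hb hs)] at this
  refine ⟨C + c * (2 * W), fun t ht θ => ?_⟩
  have hm : ∀ s ∈ Icc t b, s ∈ Ioc Tm b := fun s hs => ⟨ht.1.trans_le hs.1, hs.2⟩
  have h1 := mono_past ht.2 (fun s hs => (hada s (hm s hs) θ).neg) fun s hs => by
    have := N_pos (G := G) hQ (mem_Ioo_of hb (hm s hs)) θ
    have : 0 < s := hTm.trans (hm s hs).1
    rw [neg_neg]; positivity
  have h2 := mono_past ht.2 (fun s hs => (hada s (hm s hs) θ).sub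
    ((hada s (hm s hs) 0).const_mul c)) fun s hs => by
    have := mul_le_mul_of_nonneg_left (hH s (hm s hs) θ 0) (hTm.trans (hm s hs).1).le
    linarith
  have h3 := abs_le.1 (hC b ⟨le_rfl, le_rfl⟩ θ)
  have h4 := abs_le.1 (hW b ⟨hTb, le_rfl⟩)
  have h5 := abs_le.1 (hW t ht)
  simp only [Pi.neg_apply, Pi.sub_apply] at h1 h2
  have h6 : c * (log (G.α t 0) - log (G.α b 0)) ≤ c * (2 * W) :=
    mul_le_mul_of_nonneg_left (by linarith) hc.le
  have h7 : 0 ≤ c * (2 * W) := mul_nonneg hc.le (by linarith)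
  rw [mul_one, abs_le]
  constructor <;> linarith

theorem first_bounds (hTm : 0 < Tm) (hQ : Q ≠ 0) (hlam : |lam| < 1 / 2) (hTb : Tm < b)
    (hb : b < Tp) (hT : TCC Q lam Tm Tp G.η G.α G.U G.φ G.σ) : FirstBd b G := by
  obtain ⟨C, hC⟩ := dens_bound hTm hQ hlam hTb hb hT
  have hs : IsSign 1 := Or.inl rfl
  have dens : ∀ e, IsSign e → Bd Tm b (G.dens e) := fun e he => ⟨C, fun t ht θ => by
    rw [abs_of_nonneg (G.dens_nonneg e t θ), mul_one]; exact hC t ht e he θ⟩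
  have DU : ∀ e, IsSign e → Bd Tm b (G.D e G.U) := fun e he =>
    ((Ob.const 1).add (dens e he)).le fun t _ θ => (D_le_dens e t θ).1.trans (le_abs_self _)
  have Dφ : ∀ e, IsSign e → Bd Tm b (G.D e G.φ) := fun e he =>
    (((Ob.const 1).add (dens e he)).smul 2).le fun t _ θ =>
      (D_le_dens e t θ).2.trans (le_abs_self _)
  have ptb : ∀ X, (∀ e, IsSign e → Bd Tm b (G.D e X)) → Bd Tm b (pt X) := fun X hX =>
    (((hX 1 hs).add (hX _ hs.neg)).smul (1 / 2)).congr fun t _ θ => by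
      rw [D_half (G := G) X t θ 1]; ring
  have U : Bd Tm b G.U := Ob.of_pt G.smU hTb hb (ptb _ DU)
  have φ : Bd Tm b G.φ := Ob.of_pt G.smφ hTb hb (ptb _ Dφ)
  have DA : ∀ e, IsSign e → Bd Tm b (G.D e G.A) := fun e he => by
    refine Ob.of_sq ((((Ob.time hTm).mul (Ob.time hTm)).mul
      (((U.smul (-4)).exp.mul (dens e he)).smul 4)).le fun t ht θ => ?_)
    have ht0 : 0 < t := hTm.trans ht.1
    refine le_trans ?_ (le_abs_self _)
    rw [abs_of_nonneg (sq_nonneg _)]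
    have h1 : exp (4 * G.U t θ) / (4 * t ^ 2) * (G.D e G.A t θ) ^ 2 ≤ G.dens e t θ := by
      have : 0 ≤ (G.D e G.U t θ) ^ 2
        + (1 / 4) * ((G.D e G.φ t θ) ^ 2 + exp (2 * lam * G.φ t θ) * (G.D e G.σ t θ) ^ 2) := by
        positivity
      unfold GowdySolution.dens; linarith
    have h2 : G.D e G.A t θ ^ 2 = t * t * (4 * (exp (-4 * G.U t θ) *
        (exp (4 * G.U t θ) / (4 * t ^ 2) * (G.D e G.A t θ) ^ 2))) := by
      have : exp (-4 * G.U t θ) * exp (4 * G.U t θ) = 1 := by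
        rw [← exp_add]; simp
      rw [show ∀ x y d : ℝ, t * t * (4 * (x * (y / (4 * t ^ 2) * d))) = x * y * d from
        fun x y d => by field_simp, this, one_mul]
    rw [h2]
    gcongr
  have Dσ : ∀ e, IsSign e → Bd Tm b (G.D e G.σ) := fun e he => by
    refine Ob.of_sq ((((φ.smul (-(2 * lam))).exp.mul (dens e he)).smul 4).le fun t ht θ => ?_)
    refine le_trans ?_ (le_abs_self _)
    rw [abs_of_nonneg (sq_nonneg _)]
    have h1 : exp (2 * lam * G.φ t θ) * (G.D e G.σ t θ) ^ 2 ≤ 4 * G.dens e t θ := by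
      have : 0 ≤ (G.D e G.U t θ) ^ 2 + exp (4 * G.U t θ) / (4 * t ^ 2) * (G.D e G.A t θ) ^ 2
        + (1 / 4) * ((G.D e G.φ t θ) ^ 2) := by
        positivity
      unfold GowdySolution.dens; linarith
    have h2 : G.D e G.σ t θ ^ 2 = exp (-(2 * lam) * G.φ t θ) *
        (exp (2 * lam * G.φ t θ) * (G.D e G.σ t θ) ^ 2) := by
      have : exp (-(2 * lam) * G.φ t θ) * exp (2 * lam * G.φ t θ) = 1 := by
        rw [← exp_add]; simp
      linear_combination (-(G.D e G.σ t θ ^ 2)) * this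
    rw [h2]
    have := mul_le_mul_of_nonneg_left h1 (exp_pos (-(2 * lam) * G.φ t θ)).le
    linarith
  have logα := logα_bound hTm hQ hlam hTb hb hT
  have e1 : ∀ t ∈ Ioc Tm b, ∀ θ, G.r t θ = exp (1 / 2 * log (G.α t θ)) := fun t ht θ => by
    have h := α_pos (G := G) (mem_Ioo_of hb ht) θ
    rw [r, sqrt_eq_rpow, rpow_def_of_pos h]; ring_nf
  -- in `log N - ½ log α` the time derivative no longer contains `N`
  have hh : Bd Tm b (fun t θ => log (G.N t θ) - 1 / 2 * log (G.α t θ)) := by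
    have hsm : Sm Tm Tp (fun t θ => log (G.N t θ) - 1 / 2 * log (G.α t θ)) :=
      (smLogN hQ).sub ((Sm.const (1 / 2)).mul smLogα)
    refine Ob.of_pt hsm hTb hb ((((Ob.time hTm).mul ((dens 1 hs).add (dens _ hs.neg))).add
      (((ptb _ Dφ).smul (2 * lam)).sub ((ptb _ DU).smul 2))).congr fun t ht θ => ?_)
    have ht' := mem_Ioo_of hb ht
    have hN := N_pos (G := G) hQ ht' θ
    have h := (((G.smN.hasT ht' θ).log hN.ne').sub
      (((smLogα (G := G)).hasT ht' θ).const_mul (1 / 2))).deriv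
    change pt (fun t θ => log (G.N t θ) - 1 / 2 * log (G.α t θ)) t θ = _ at h
    rw [h, pt_N hTm ht' θ, pt_logα ht' θ, en]
    field_simp
    ring
  refine ⟨DU, DA, Dφ, Dσ, dens, U, φ, logα, logα.exp.congr fun t ht θ => ?_,
    (logα.smul (1 / 2)).exp.congr e1, (logα.smul (-(1 / 2))).exp.congr fun t ht θ => ?_,
    (hh.add (logα.smul (1 / 2))).exp.congr fun t ht θ => ?_⟩
  · rw [exp_log (α_pos (mem_Ioo_of hb ht) θ)]
  · rw [e1 t ht θ, ← exp_neg]; ring_nf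
  · rw [sub_add_cancel, exp_log (N_pos hQ (mem_Ioo_of hb ht) θ)]

end GowdySolution

/-! ### Second derivatives -/

/-- Smooth bounded functions whose angular derivative is at most of the size of the weight `S`. -/
structure Ctl (Tm Tp b : ℝ) (S f : ℝ → ℝ → ℝ) : Prop where
  sm : Sm Tm Tp f
  bd : Bd Tm b f
  th : Ob Tm b S (pth f)

namespace Ctl
variable {Tm Tp b : ℝ} {S f g : ℝ → ℝ → ℝ}

theorem mem {t : ℝ} (hb : b < Tp) (ht : t ∈ Ioc Tm b) : t ∈ Ioo Tm Tp := ⟨ht.1, ht.2.trans_lt hb⟩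

theorem congr (hb : b < Tp) (hg : Sm Tm Tp g) (h : ∀ t ∈ Ioo Tm Tp, ∀ θ, g t θ = f t θ)
    (hf : Ctl Tm Tp b S f) : Ctl Tm Tp b S g :=
  ⟨hg, hf.bd.congr fun t ht θ => h t (mem hb ht) θ,
    hf.th.congr fun t ht θ => pth_congr (h t (mem hb ht)) θ⟩

theorem add (hb : b < Tp) (hf : Ctl Tm Tp b S f) (hg : Ctl Tm Tp b S g) :
    Ctl Tm Tp b S (fun t θ => f t θ + g t θ) :=
  ⟨hf.sm.add hg.sm, hf.bd.add hg.bd, (hf.th.add hg.th).congr fun _ ht θ =>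
    ((hf.sm.hasTh (mem hb ht) θ).add (hg.sm.hasTh (mem hb ht) θ)).deriv⟩

theorem mul (hb : b < Tp) (hf : Ctl Tm Tp b S f) (hg : Ctl Tm Tp b S g) :
    Ctl Tm Tp b S (fun t θ => f t θ * g t θ) :=
  ⟨hf.sm.mul hg.sm, hf.bd.mul hg.bd, ((hf.th.mul_right hg.bd).add (hf.bd.mul hg.th)).congr
    fun _ ht θ => ((hf.sm.hasTh (mem hb ht) θ).mul (hg.sm.hasTh (mem hb ht) θ)).deriv⟩

theorem of_bd (hS : ∀ t θ, 1 ≤ S t θ) (hf : Sm Tm Tp f) (h1 : Bd Tm b f) (h2 : Bd Tm b (pth f)) :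
    Ctl Tm Tp b S f := ⟨hf, h1, h2.weight hS⟩

theorem const (hS : ∀ t θ, 1 ≤ S t θ) (c : ℝ) : Ctl Tm Tp b S (fun _ _ => c) :=
  of_bd hS (Sm.const c) (Ob.const c) ((Ob.const 0).congr fun _ _ _ => by simp [pth])

theorem time (hS : ∀ t θ, 1 ≤ S t θ) (hTm : 0 < Tm) : Ctl Tm Tp b S (fun t _ => t) :=
  of_bd hS Sm.time (Ob.time hTm) ((Ob.const 0).congr fun _ _ _ => by simp [pth])

theorem timeInv (hS : ∀ t θ, 1 ≤ S t θ) (hTm : 0 < Tm) : Ctl Tm Tp b S (fun t _ => t⁻¹) :=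
  of_bd hS (Sm.time.inv fun _ ht _ => (hTm.trans ht.1).ne') (Ob.timeInv hTm)
    ((Ob.const 0).congr fun _ _ _ => by simp [pth])

theorem exp (hb : b < Tp) (hf : Ctl Tm Tp b S f) : Ctl Tm Tp b S (fun t θ => Real.exp (f t θ)) :=
  ⟨hf.sm.exp, hf.bd.exp, (hf.bd.exp.mul hf.th).congr fun _ ht θ =>
    ((hf.sm.hasTh (mem hb ht) θ).exp).deriv⟩

theorem smul (hS : ∀ t θ, 1 ≤ S t θ) (hb : b < Tp) (c : ℝ) (hf : Ctl Tm Tp b S f) :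
    Ctl Tm Tp b S (fun t θ => c * f t θ) := (const hS c).mul hb hf

theorem sub (hS : ∀ t θ, 1 ≤ S t θ) (hb : b < Tp) (hf : Ctl Tm Tp b S f) (hg : Ctl Tm Tp b S g) :
    Ctl Tm Tp b S (fun t θ => f t θ - g t θ) :=
  (hf.add hb (hg.smul hS hb (-1))).congr hb (hf.sm.sub hg.sm) fun _ _ _ => by ring

end Ctl

namespace GowdySolution
variable {Q lam Tm Tp b : ℝ} {G : GowdySolution Q lam Tm Tp}

theorem FirstBd.pth {X : ℝ → ℝ → ℝ} (F : FirstBd b G) (hb : b < Tp)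
    (hX : ∀ e, IsSign e → Bd Tm b (G.D e X)) : Bd Tm b (pth X) :=
  ((((hX 1 (Or.inl rfl)).sub (hX (-1) (Or.inr rfl))).smul (1 / 2)).mul F.rinv).congr
    fun _ ht θ => pth_eq (mem_Ioo_of hb ht) θ

theorem FirstBd.L (F : FirstBd b G) (hTm : 0 < Tm) (hb : b < Tp) : Bd Tm b G.L :=
  (((F.pth hb F.Dφ).smul (2 * lam)).sub ((F.pth hb F.DU).smul 2)).add
    (((Ob.time hTm).mul ((F.dens 1 (Or.inl rfl)).sub (F.dens (-1) (Or.inr rfl)))).mul F.rinv)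

/-- `∂_t ∂_θ log α = - t N L`. -/
theorem pt_pth_logα (hTm : 0 < Tm) {t : ℝ} (ht : t ∈ Ioo Tm Tp) (θ : ℝ) :
    pt (pth (fun t θ => log (G.α t θ))) t θ = -1 * (t * (G.N t θ * G.L t θ)) := by
  rw [smLogα.comm ht θ, pth_congr (g := fun t θ => -(t * G.N t θ)) (fun θ => pt_logα ht θ) θ]
  have h := ((G.smN.hasTh ht θ).const_mul t).neg.deriv
  change pth (fun t θ => -(t * G.N t θ)) t θ = _ at h
  rw [h, pth_N hTm ht θ]
  ring

theorem FirstBd.logα' (F : FirstBd b G) (hTm : 0 < Tm) (hTb : Tm < b) (hb : b < Tp) :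
    Bd Tm b (_root_.pth (fun t θ => log (G.α t θ))) := by
  refine Ob.of_pt (smLogα (G := G)).pth hTb hb ((((Ob.time hTm).mul
    (F.N.mul (F.L hTm hb))).smul (-1)).congr fun t ht θ => ?_)
  exact pt_pth_logα hTm (mem_Ioo_of hb ht) θ

variable (b G) in
/-- All null derivatives are controlled relative to the weight `S ≥ 1`. -/
structure SecondCtl (S : ℝ → ℝ → ℝ) : Prop where
  one_le : ∀ t θ, 1 ≤ S t θ
  DU : ∀ e, IsSign e → Ctl Tm Tp b S (G.D e G.U)
  DA : ∀ e, IsSign e → Ctl Tm Tp b S (G.D e G.A)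
  Dφ : ∀ e, IsSign e → Ctl Tm Tp b S (G.D e G.φ)
  Dσ : ∀ e, IsSign e → Ctl Tm Tp b S (G.D e G.σ)

namespace SecondCtl
variable {S : ℝ → ℝ → ℝ}

theorem logα (H : SecondCtl b G S) (F : FirstBd b G) (hTm : 0 < Tm) (hTb : Tm < b) (hb : b < Tp) :
    Ctl Tm Tp b S (fun t θ => log (G.α t θ)) :=
  Ctl.of_bd H.one_le smLogα F.logα (F.logα' hTm hTb hb)

theorem r_eq {t : ℝ} (ht : t ∈ Ioo Tm Tp) (θ : ℝ) :
    G.r t θ = exp (1 / 2 * log (G.α t θ)) := by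
  rw [r, sqrt_eq_rpow, rpow_def_of_pos (α_pos ht θ)]; ring_nf

theorem rinv (H : SecondCtl b G S) (F : FirstBd b G) (hTm : 0 < Tm) (hTb : Tm < b) (hb : b < Tp) :
    Ctl Tm Tp b S (fun t θ => (G.r t θ)⁻¹) :=
  (((H.logα F hTm hTb hb).smul H.one_le hb (-(1 / 2))).exp hb).congr hb smRinv fun t ht θ => by
    rw [r_eq ht θ, ← exp_neg]; ring_nf

theorem N (H : SecondCtl b G S) (F : FirstBd b G) (hTm : 0 < Tm) (hb : b < Tp) :
    Ctl Tm Tp b S G.N :=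
  Ctl.of_bd H.one_le G.smN F.N
    ((F.N.mul (F.L hTm hb)).congr fun _ ht θ => pth_N hTm (mem_Ioo_of hb ht) θ)

theorem expU (H : SecondCtl b G S) (F : FirstBd b G) (hb : b < Tp) :
    Ctl Tm Tp b S (fun t θ => exp (4 * G.U t θ)) :=
  ((Ctl.of_bd H.one_le G.smU F.U (F.pth hb F.DU)).smul H.one_le hb 4).exp hb

theorem expφ (H : SecondCtl b G S) (F : FirstBd b G) (hb : b < Tp) :
    Ctl Tm Tp b S (fun t θ => exp (2 * lam * G.φ t θ)) :=
  ((Ctl.of_bd H.one_le G.smφ F.φ (F.pth hb F.Dφ)).smul H.one_le hb (2 * lam)).exp hb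

/-- The right-hand sides of the four wave equations are controlled. -/
theorem wave (H : SecondCtl b G S) (F : FirstBd b G) (hTm : 0 < Tm) (hb : b < Tp)
    {e : ℝ} (he : IsSign e) :
    Ob Tm b S (pth (G.D (-e) (G.D e G.U))) ∧ Ob Tm b S (pth (G.D (-e) (G.D e G.A))) ∧
    Ob Tm b S (pth (G.D (-e) (G.D e G.φ))) ∧ Ob Tm b S (pth (G.D (-e) (G.D e G.σ))) := by
  have hS := H.one_le
  have tI := Ctl.timeInv (Tp := Tp) (b := b) hS hTm
  have tN := ((Ctl.time (Tp := Tp) (b := b) hS hTm).mul hb (H.N F hTm hb))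
  have U1 := H.DU e he
  have U2 := H.DU _ he.neg
  have A1 := H.DA e he
  have A2 := H.DA _ he.neg
  have φ1 := H.Dφ e he
  have φ2 := H.Dφ _ he.neg
  have σ1 := H.Dσ e he
  have σ2 := H.Dσ _ he.neg
  -- `(X₁ + X₂)/t` and `t N X₁`
  have lin : ∀ {X1 X2 : ℝ → ℝ → ℝ} (c : ℝ), Ctl Tm Tp b S X1 → Ctl Tm Tp b S X2 →
      Ctl Tm Tp b S (fun t θ => c * ((X1 t θ + X2 t θ) * t⁻¹)
        - 1 / 2 * (t * G.N t θ * X1 t θ)) := fun c h1 h2 =>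
    ((((h1.add hb h2).mul hb tI)).smul hS hb c).sub hS hb ((tN.mul hb h1).smul hS hb (1 / 2))
  refine ⟨?_, ?_, ?_, ?_⟩
  · refine ((lin (-(1 / 2)) U1 U2).add hb ((((((H.expU F hb).mul hb (tI.mul hb tI)).mul hb
      (A1.mul hb A2)).smul hS hb (1 / 2))).add hb ((H.N F hTm hb).smul hS hb (1 / 4)))).th.congr
      fun t ht θ => pth_congr (fun θ => ?_) θ
    rw [wave_U (mem_Ioo_of hb ht) θ he]
    have ht0 : t ≠ 0 := (hTm.trans ht.1).ne'
    field_simp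
    ring
  · refine ((lin (1 / 2) A1 A2).add hb (((A1.mul hb U2).add hb (A2.mul hb U1)).smul
      hS hb (-2))).th.congr fun t ht θ => pth_congr (fun θ => ?_) θ
    rw [wave_A (mem_Ioo_of hb ht) θ he]
    have ht0 : t ≠ 0 := (hTm.trans ht.1).ne'
    field_simp
    ring
  · refine ((lin (-(1 / 2)) φ1 φ2).add hb ((((H.expφ F hb).mul hb
      (σ1.mul hb σ2)).smul hS hb lam).sub hS hb ((H.N F hTm hb).smul hS hb lam))).th.congr
      fun t ht θ => pth_congr (fun θ => ?_) θ
    rw [wave_φ (mem_Ioo_of hb ht) θ he]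
    have ht0 : t ≠ 0 := (hTm.trans ht.1).ne'
    field_simp
    ring
  · refine ((lin (-(1 / 2)) σ1 σ2).add hb (((φ1.mul hb σ2).add hb (φ2.mul hb σ1)).smul
      hS hb (-lam))).th.congr fun t ht θ => pth_congr (fun θ => ?_) θ
    rw [wave_σ (mem_Ioo_of hb ht) θ he]
    have ht0 : t ≠ 0 := (hTm.trans ht.1).ne'
    field_simp
    ring

end SecondCtl

/-- Commutator of a null derivative with the angular derivative. -/
theorem D_pth {f : ℝ → ℝ → ℝ} (hf : Sm Tm Tp f) {t : ℝ} (ht : t ∈ Ioo Tm Tp) (θ e : ℝ) :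
    G.D e (pth f) t θ = pth (G.D e f) t θ - e * pth G.r t θ * pth f t θ := by
  have h2 : pth (G.D e f) t θ = pth (pt f) t θ + (e * pth G.r t θ * pth f t θ
      + e * G.r t θ * pth (pth f) t θ) :=
    ((hf.pt.hasTh ht θ).add (((G.smr.hasTh ht θ).const_mul e).mul (hf.pth.hasTh ht θ))).deriv
  rw [h2, D, hf.comm ht θ]
  ring

variable (G) in
/-- The sum of the squares of the angular derivatives of the null derivatives in direction `e`. -/
def H (e t θ : ℝ) : ℝ :=
  pth (G.D e G.U) t θ ^ 2 + pth (G.D e G.A) t θ ^ 2 + pth (G.D e G.φ) t θ ^ 2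
    + pth (G.D e G.σ) t θ ^ 2

theorem smH (e : ℝ) : Sm Tm Tp (G.H e) :=
  ((((G.smD e G.smU).pth.sq).add (G.smD e G.smA).pth.sq).add (G.smD e G.smφ).pth.sq).add
    (G.smD e G.smσ).pth.sq

variable (G) in
/-- The weight `√(1 + H₊ + H₋)`. -/
def wt (t θ : ℝ) : ℝ := √(1 + G.H 1 t θ + G.H (-1) t θ)

theorem H_nonneg (e t θ : ℝ) : 0 ≤ G.H e t θ := by unfold H; positivity

theorem one_le_wt (t θ : ℝ) : 1 ≤ G.wt t θ :=
  one_le_sqrt.2 (by linarith [H_nonneg (G := G) 1 t θ, H_nonneg (G := G) (-1) t θ])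

theorem wt_sq (t θ : ℝ) {e : ℝ} (he : IsSign e) :
    G.wt t θ ^ 2 = 1 + G.H e t θ + G.H (-e) t θ := by
  rw [wt, sq_sqrt (by linarith [H_nonneg (G := G) 1 t θ, H_nonneg (G := G) (-1) t θ])]
  rcases he with rfl | rfl
  · rfl
  · rw [neg_neg]; ring

theorem secondCtl_wt (F : FirstBd b G) : SecondCtl b G G.wt := by
  have key : ∀ {e x t θ : ℝ}, IsSign e → x ^ 2 ≤ G.H e t θ → |x| ≤ 1 * G.wt t θ := by
    intro e x t θ he hx
    rw [one_mul]
    refine abs_le_of_sq_le_sq ?_ (zero_le_one.trans (one_le_wt t θ))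
    rw [wt_sq t θ he]
    linarith [H_nonneg (G := G) (-e) t θ]
  refine ⟨one_le_wt, fun e he => ⟨G.smD e G.smU, F.DU e he, 1, fun t _ θ => key he ?_⟩,
    fun e he => ⟨G.smD e G.smA, F.DA e he, 1, fun t _ θ => key he ?_⟩,
    fun e he => ⟨G.smD e G.smφ, F.Dφ e he, 1, fun t _ θ => key he ?_⟩,
    fun e he => ⟨G.smD e G.smσ, F.Dσ e he, 1, fun t _ θ => key he ?_⟩⟩
  all_goals
    unfold H
    linarith [sq_nonneg (pth (G.D e G.U) t θ), sq_nonneg (pth (G.D e G.A) t θ),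
      sq_nonneg (pth (G.D e G.φ) t θ), sq_nonneg (pth (G.D e G.σ) t θ)]

theorem D_H {t : ℝ} (ht : t ∈ Ioo Tm Tp) (θ e : ℝ) :
    pt (G.H e) t θ + -e * G.r t θ * pth (G.H e) t θ
      = 2 * (pth (G.D e G.U) t θ * G.D (-e) (pth (G.D e G.U)) t θ)
        + 2 * (pth (G.D e G.A) t θ * G.D (-e) (pth (G.D e G.A)) t θ)
        + 2 * (pth (G.D e G.φ) t θ * G.D (-e) (pth (G.D e G.φ)) t θ)
        + 2 * (pth (G.D e G.σ) t θ * G.D (-e) (pth (G.D e G.σ)) t θ) := by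
  have l := fun {X : ℝ → ℝ → ℝ} (hX : Sm Tm Tp X) => hX.hasLine ht θ (-e * G.r t θ)
  have key := (((((l (G.smD e G.smU).pth).pow 2).add ((l (G.smD e G.smA).pth).pow 2)).add
    ((l (G.smD e G.smφ).pth).pow 2)).add ((l (G.smD e G.smσ).pth).pow 2)).unique (l (smH e))
  rw [← key]
  simp only [D, add_zero, mul_zero]
  ring

theorem wt_bound (F : FirstBd b G) (hTm : 0 < Tm) (hTb : Tm < b) (hb : b < Tp) :
    Bd Tm b G.wt := by
  have S := secondCtl_wt F
  have hS := S.one_le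
  have hr' : Bd Tm b (pth G.r) :=
    ((F.r.mul (F.logα' hTm hTb hb)).smul (1 / 2)).congr fun t ht θ => by
      have ht' := mem_Ioo_of hb ht
      rw [pth_congr (g := fun t θ => exp (1 / 2 * log (G.α t θ)))
        (fun θ => SecondCtl.r_eq ht' θ) θ, SecondCtl.r_eq ht' θ]
      have h := ((((smLogα (G := G)).hasTh ht' θ).const_mul (1 / 2)).exp).deriv
      change pth (fun t θ => exp (1 / 2 * log (G.α t θ))) t θ = _ at h
      rw [h]; ring
  -- the terms `p · D p` are bounded by the square of the weight
  have prod : ∀ {X : ℝ → ℝ → ℝ} {e : ℝ}, Ctl Tm Tp b G.wt (G.D e X) →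
      Ob Tm b G.wt (pth (G.D (-e) (G.D e X))) → ∃ C, ∀ t ∈ Ioc Tm b, ∀ θ,
      |pth (G.D e X) t θ * G.D (-e) (pth (G.D e X)) t θ| ≤ C * G.wt t θ ^ 2 := by
    intro X e h1 h2
    have h3 : Ob Tm b G.wt (G.D (-e) (pth (G.D e X))) :=
      (h2.sub ((hr'.smul (-e)).mul h1.th)).congr fun t ht θ =>
        D_pth h1.sm (mem_Ioo_of hb ht) θ (-e)
    obtain ⟨C1, hC1⟩ := h1.th
    obtain ⟨C2, hC2⟩ := h3
    refine ⟨C1 * C2, fun t ht θ => ?_⟩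
    rw [abs_mul, show C1 * C2 * G.wt t θ ^ 2 = (C1 * G.wt t θ) * (C2 * G.wt t θ) by ring]
    exact mul_le_mul (hC1 t ht θ) (hC2 t ht θ) (abs_nonneg _) ((abs_nonneg _).trans (hC1 t ht θ))
  have one : ∀ {e : ℝ}, IsSign e → ∃ C, ∀ t ∈ Ioc Tm b, ∀ θ,
      |pt (G.H e) t θ + -e * G.r t θ * pth (G.H e) t θ| ≤ C * G.wt t θ ^ 2 := by
    intro e he
    obtain ⟨w1, w2, w3, w4⟩ := S.wave F hTm hb he
    obtain ⟨C1, h1⟩ := prod (S.DU e he) w1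
    obtain ⟨C2, h2⟩ := prod (S.DA e he) w2
    obtain ⟨C3, h3⟩ := prod (S.Dφ e he) w3
    obtain ⟨C4, h4⟩ := prod (S.Dσ e he) w4
    refine ⟨2 * (C1 + C2 + C3 + C4), fun t ht θ => ?_⟩
    rw [D_H (mem_Ioo_of hb ht) θ e]
    have k1 := abs_le.1 (h1 t ht θ)
    have k2 := abs_le.1 (h2 t ht θ)
    have k3 := abs_le.1 (h3 t ht θ)
    have k4 := abs_le.1 (h4 t ht θ)
    rw [abs_le]
    constructor <;> linarith
  obtain ⟨C1, h1⟩ := one (Or.inl rfl : IsSign 1)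
  obtain ⟨C2, h2⟩ := one (Or.inr rfl : IsSign (-1))
  obtain ⟨C, hC⟩ := light_cone_bound (g := G.H) (r := G.r) (fun e _ => smH e) hTm hTb hb
    (w := fun _ => 0) (w' := fun _ => 0) (κ := 0) (c := |C1| + |C2|) (W := 0) le_rfl
    (by positivity) (fun s _ => hasDerivAt_const s 0) (fun _ _ => le_rfl)
    (fun _ _ => by simp) (fun t ht e he θ => by
      rw [← wt_sq t θ he]
      have hw : 0 ≤ G.wt t θ ^ 2 := sq_nonneg _
      have m1 := mul_le_mul_of_nonneg_right (le_abs_self C1) hw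
      have m2 := mul_le_mul_of_nonneg_right (le_abs_self C2) hw
      have m3 := mul_nonneg (abs_nonneg C1) hw
      have m4 := mul_nonneg (abs_nonneg C2) hw
      rcases he with rfl | rfl
      · linarith [(abs_le.1 (h1 t ht θ)).1]
      · linarith [(abs_le.1 (h2 t ht θ)).1])
  have hw2 : Bd Tm b (fun t θ => G.wt t θ ^ 2) := ⟨1 + C + C, fun t ht θ => by
    beta_reduce
    rw [abs_of_nonneg (sq_nonneg _), wt_sq t θ (Or.inl rfl), mul_one]
    have k1 := hC t ht 1 (Or.inl rfl) θ
    have k2 := hC t ht (-1) (Or.inr rfl) θ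
    linarith⟩
  exact hw2.of_sq

/-- The weight `1` itself controls the null derivatives: their angular derivatives are bounded. -/
theorem secondCtl_one (F : FirstBd b G) (hTm : 0 < Tm) (hTb : Tm < b) (hb : b < Tp) :
    SecondCtl b G (fun _ _ => 1) := by
  have hw := wt_bound F hTm hTb hb
  have S := secondCtl_wt F
  exact ⟨fun _ _ => le_rfl, fun e he => ⟨(S.DU e he).sm, (S.DU e he).bd, (S.DU e he).th.of_weight hw⟩,
    fun e he => ⟨(S.DA e he).sm, (S.DA e he).bd, (S.DA e he).th.of_weight hw⟩,
    fun e he => ⟨(S.Dφ e he).sm, (S.Dφ e he).bd, (S.Dφ e he).th.of_weight hw⟩,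
    fun e he => ⟨(S.Dσ e he).sm, (S.Dσ e he).bd, (S.Dσ e he).th.of_weight hw⟩⟩

end GowdySolution

namespace GowdySolution
variable {Q lam Tm Tp b : ℝ} {G : GowdySolution Q lam Tm Tp}

/-! ### Second derivatives of `α` and `η` -/

namespace SecondCtl
variable {S : ℝ → ℝ → ℝ}

theorem dens (H : SecondCtl b G S) (F : FirstBd b G) (hTm : 0 < Tm) (hb : b < Tp)
    {e : ℝ} (he : IsSign e) : Ctl Tm Tp b S (G.dens e) := by
  have hS := H.one_le
  have tI := Ctl.timeInv (Tp := Tp) (b := b) hS hTm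
  have sq : ∀ {X : ℝ → ℝ → ℝ}, Ctl Tm Tp b S X → Ctl Tm Tp b S (fun t θ => X t θ * X t θ) :=
    fun h => h.mul hb h
  refine Ctl.congr hb (G.smDens hTm e) (fun t ht θ => ?_)
    (((sq (H.DU e he)).add hb ((((H.expU F hb).mul hb (sq tI)).mul hb (sq (H.DA e he))).smul
      hS hb (1 / 4))).add hb (((sq (H.Dφ e he)).add hb
        ((H.expφ F hb).mul hb (sq (H.Dσ e he)))).smul hS hb (1 / 4)))
  have ht0 : t ≠ 0 := (hTm.trans ht.1).ne'
  rw [GowdySolution.dens]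
  field_simp

theorem pth (H : SecondCtl b G S) (F : FirstBd b G) (hTm : 0 < Tm) (hTb : Tm < b) (hb : b < Tp)
    {X : ℝ → ℝ → ℝ} (hX : Sm Tm Tp X) (hD : ∀ e, IsSign e → Ctl Tm Tp b S (G.D e X)) :
    Ctl Tm Tp b S (_root_.pth X) :=
  ((((hD 1 (Or.inl rfl)).sub H.one_le hb (hD (-1) (Or.inr rfl))).smul H.one_le hb (1 / 2)).mul hb
    (H.rinv F hTm hTb hb)).congr hb hX.pth fun _ ht θ => pth_eq ht θ

/-- The flux term `t (dens₊ - dens₋) / √α`. -/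
theorem flux (H : SecondCtl b G S) (F : FirstBd b G) (hTm : 0 < Tm) (hTb : Tm < b) (hb : b < Tp) :
    Ctl Tm Tp b S (fun t θ => t * (G.dens 1 t θ - G.dens (-1) t θ) * (G.r t θ)⁻¹) :=
  ((Ctl.time H.one_le hTm).mul hb ((H.dens F hTm hb (Or.inl rfl)).sub H.one_le hb
    (H.dens F hTm hb (Or.inr rfl)))).mul hb (H.rinv F hTm hTb hb)

theorem L (H : SecondCtl b G S) (F : FirstBd b G) (hTm : 0 < Tm) (hTb : Tm < b) (hb : b < Tp) :
    Ctl Tm Tp b S G.L :=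
  (((H.pth F hTm hTb hb G.smφ H.Dφ).smul H.one_le hb (2 * lam)).sub H.one_le hb
    ((H.pth F hTm hTb hb G.smU H.DU).smul H.one_le hb 2)).add hb (H.flux F hTm hTb hb)

end SecondCtl


/-- `∂_θ log α` has a bounded angular derivative, because the time derivative of the latter is
`-∂_θ (t N L)`. -/
theorem ctl_logα' (F : FirstBd b G) (S : SecondCtl b G (fun _ _ => 1)) (hTm : 0 < Tm)
    (hTb : Tm < b) (hb : b < Tp) : Ctl Tm Tp b (fun _ _ => 1) (pth (fun t θ => log (G.α t θ))) := by
  have hsm := (smLogα (G := G)).pth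
  refine ⟨hsm, F.logα' hTm hTb hb, Ob.of_pt hsm.pth hTb hb ?_⟩
  refine ((((Ctl.time S.one_le hTm).mul hb ((S.N F hTm hb).mul hb (S.L F hTm hTb hb))).smul
    S.one_le hb (-1)).th).congr fun t ht θ => ?_
  rw [hsm.comm (mem_Ioo_of hb ht) θ]
  exact pth_congr (fun θ => pt_pth_logα hTm (mem_Ioo_of hb ht) θ) θ

theorem pth_logα {t : ℝ} (ht : t ∈ Ioo Tm Tp) (θ : ℝ) :
    pth (fun t θ => log (G.α t θ)) t θ = pth G.α t θ * (G.α t θ)⁻¹ := by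
  have h := ((G.smα.hasTh ht θ).log (α_pos ht θ).ne').deriv
  change pth (fun t θ => log (G.α t θ)) t θ = _ at h
  rw [h, div_eq_mul_inv]

theorem bd_α'' (F : FirstBd b G) (S : SecondCtl b G (fun _ _ => 1)) (hTm : 0 < Tm)
    (hTb : Tm < b) (hb : b < Tp) : Bd Tm b (pth (pth G.α)) := by
  have hα : Ctl Tm Tp b (fun _ _ => 1) G.α := ((S.logα F hTm hTb hb).exp hb).congr hb G.smα
    fun t ht θ => (exp_log (α_pos ht θ)).symm
  refine (hα.mul hb (ctl_logα' F S hTm hTb hb)).th.congr fun t ht θ => pth_congr (fun θ => ?_) θ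
  have ht' := mem_Ioo_of hb ht
  have := α_pos (G := G) ht' θ
  rw [pth_logα ht' θ]
  field_simp

theorem bd_η'' (F : FirstBd b G) (S : SecondCtl b G (fun _ _ => 1)) (hTm : 0 < Tm)
    (hTb : Tm < b) (hb : b < Tp) : Bd Tm b (pth (pth G.η)) := by
  refine (((S.flux F hTm hTb hb).smul S.one_le hb (1 / 2)).sub S.one_le hb
    ((ctl_logα' F S hTm hTb hb).smul S.one_le hb (1 / 2))).th.congr
    fun t ht θ => pth_congr (fun θ => ?_) θ
  rw [pth_η hTm (mem_Ioo_of hb ht) θ, pth_logα (mem_Ioo_of hb ht) θ]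

theorem bd_ηdot' (F : FirstBd b G) (S : SecondCtl b G (fun _ _ => 1)) (hTm : 0 < Tm)
    (hb : b < Tp) : Bd Tm b (pth (pt G.η)) := by
  refine ((Ctl.time S.one_le hTm).mul hb ((((S.dens F hTm hb (Or.inl rfl)).add hb
    (S.dens F hTm hb (Or.inr rfl))).smul S.one_le hb (1 / 2)).add hb
    ((S.N F hTm hb).smul S.one_le hb (1 / 4)))).th.congr fun t ht θ => pth_congr (fun θ => ?_) θ
  rw [pt_η hTm (mem_Ioo_of hb ht) θ, en]
  ring

theorem bd_cross (F : FirstBd b G) (S : SecondCtl b G (fun _ _ => 1)) (hTm : 0 < Tm)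
    (hb : b < Tp)
    {e : ℝ} (he : IsSign e) : Bd Tm b (G.cross e) := by
  have tI := (Ob.timeInv (b := b) hTm)
  refine (((F.DU e he).mul (F.DU _ he.neg)).sub (((S.expU F hb).bd.mul (tI.mul tI)).mul
    (((F.DA e he).mul (F.DA _ he.neg)).smul (1 / 4)))).add ((((F.Dφ e he).mul (F.Dφ _ he.neg)).add
      ((S.expφ F hb).bd.mul ((F.Dσ e he).mul (F.Dσ _ he.neg)))).smul (1 / 4)) |>.congr
      fun t ht θ => ?_
  have ht0 : t ≠ 0 := (hTm.trans ht.1).ne'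
  rw [cross]
  field_simp

theorem bd_pt_dens (F : FirstBd b G) (S : SecondCtl b G (fun _ _ => 1)) (hTm : 0 < Tm)
    (hb : b < Tp)
    {e : ℝ} (he : IsSign e) : Bd Tm b (pt (G.dens e)) := by
  refine (((((Ob.time hTm).mul F.N).mul (F.dens e he)).smul (-1)).sub
    (((F.dens e he).add (bd_cross F S hTm hb he)).mul (Ob.timeInv hTm))).add
    ((F.N.mul ((F.DU e he).sub ((F.Dφ e he).smul lam))).smul (1 / 2)) |>.add
    ((F.r.mul (S.dens F hTm hb he).th).smul e) |>.congr fun t ht θ => ?_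
  rw [pt_dens hTm (mem_Ioo_of hb ht) θ he]
  ring

theorem bd_ηddot (F : FirstBd b G) (S : SecondCtl b G (fun _ _ => 1)) (hTm : 0 < Tm)
    (hb : b < Tp) : Bd Tm b (pt (pt G.η)) := by
  have hs : IsSign 1 := Or.inl rfl
  have ptb : ∀ X, (∀ e, IsSign e → Bd Tm b (G.D e X)) → Bd Tm b (pt X) := fun X hX =>
    (((hX 1 hs).add (hX _ hs.neg)).smul (1 / 2)).congr fun t _ θ => by
      rw [D_half (G := G) X t θ 1]; ring
  have hen : Bd Tm b G.en := (((F.dens 1 hs).add (F.dens _ hs.neg)).smul (1 / 2)).congr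
    fun t _ θ => by rw [en]; ring
  have hen' : Bd Tm b (pt G.en) := (((bd_pt_dens F S hTm hb hs).add
    (bd_pt_dens F S hTm hb hs.neg)).smul (1 / 2)).congr fun t ht θ => by
      have h := ((((G.smDens hTm 1).hasT (mem_Ioo_of hb ht) θ).add
        ((G.smDens hTm (-1)).hasT (mem_Ioo_of hb ht) θ)).div_const 2).deriv
      change pt G.en t θ = _ at h
      rw [h]; ring
  have hN' : Bd Tm b (pt G.N) := (F.N.mul (((((Ob.time hTm).mul F.N).smul (-(1 / 2))).add
    ((((Ob.time hTm).mul hen).smul 2))).add (((ptb _ F.Dφ).smul (2 * lam)).sub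
      ((ptb _ F.DU).smul 2)))).congr fun t ht θ => by
      rw [pt_N hTm (mem_Ioo_of hb ht) θ]; ring
  refine ((hen.add (F.N.smul (1 / 4))).add ((Ob.time hTm).mul
    (hen'.add (hN'.smul (1 / 4))))).congr fun t ht θ => ?_
  have ht' := mem_Ioo_of hb ht
  rw [pt_congr (g := fun t θ => t * (G.en t θ + 1 / 4 * G.N t θ)) ht'
    (fun s hs θ => pt_η hTm hs θ) θ]
  have h := ((hasDerivAt_id t).mul (((smEn (G := G) hTm).hasT ht' θ).add
    ((G.smN.hasT ht' θ).const_mul (1 / 4)))).deriv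
  change pt (fun t θ => t * (G.en t θ + 1 / 4 * G.N t θ)) t θ = _ at h
  rw [h]
  simp

end GowdySolution

theorem eta_second_derivatives_bounded_past (Q lam Tm Tp t_i : ℝ) (hQ : Q ≠ 0) (hTm : 0 < Tm) (hti : Tm < t_i)
    (hTp : t_i < Tp) (G : GowdySolution Q lam Tm Tp)
    (lamBar : ℝ) (hlam : |lam| ≤ lamBar) (hlamBar : lamBar < 1 / 2)
    (htcc : TCC Q lam Tm Tp G.η G.α G.U G.φ G.σ) :
    ∃ C : ℝ, ∀ t ∈ Ioc Tm t_i, ∀ θ : ℝ,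
      |pth (pth G.α) t θ| ≤ C ∧ |pt (pt G.η) t θ| ≤ C
      ∧ |pth (pt G.η) t θ| ≤ C ∧ |pth (pth G.η) t θ| ≤ C := by
  have F := GowdySolution.first_bounds hTm hQ (hlam.trans_lt hlamBar) hti hTp htcc
  have S := GowdySolution.secondCtl_one F hTm hti hTp
  obtain ⟨C1, h1, k1⟩ := (GowdySolution.bd_α'' F S hTm hti hTp).bd
  obtain ⟨C2, h2, k2⟩ := (GowdySolution.bd_ηddot F S hTm hTp).bd
  obtain ⟨C3, h3, k3⟩ := (GowdySolution.bd_ηdot' F S hTm hTp).bd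
  obtain ⟨C4, h4, k4⟩ := (GowdySolution.bd_η'' F S hTm hti hTp).bd
  refine ⟨C1 + C2 + C3 + C4, fun t ht θ => ⟨?_, ?_, ?_, ?_⟩⟩
  · linarith [k1 t ht θ]
  · linarith [k2 t ht θ]
  · linarith [k3 t ht θ]
  · linarith [k4 t ht θ]

end
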